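/- arXiv:1305.5440 — 2 statements merged into one kernel-verified Lean document; each statement's English description precedes it below -/
import Mathlib

section
/- For every γ > 0 and every finite set J, there exists η > 0 such that the following holds. Let V = (J, (V_j)_{j∈J}, r, H) be a hypergraph system, let ν be a weighted hypergraph on V satisfying the H-linear forms condition within η, and let e₁ ∈ H. For each ι ∈ {0,1} and each e ∈ H ∖ {e₁}, let g_e^{(ι)} : V_e → ℝ_{≥0} be a function such that either g_e^{(ι)} ≤ 1 pointwise or g_e^{(ι)} ≤ ν_e pointwise. Then |E[(ν_{e₁}(x_{e₁}) − 1)·∏_{ι∈{0,1}} ∏_{e∈H∖{e₁}} g_e^{(ι)}(x_e^{(ι)}) | x_J^{(0)}, x_J^{(1)} ∈ V_J with x_j^{(0)} = x_j^{(1)} = x_j for all j ∈ e₁]| ≤ γ, where the expectation is over independent uniform x_j^{(0)}, x_j^{(1)} ∈ V_j for j ∈ J ∖ e₁ and a single uniform x_j ∈ V_j for each j ∈ e₁. -/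
/-!
The proof is an iterated Cauchy–Schwarz argument over the variables `x_j`, `j ∈ e₁`. To treat
`x_k`, split the factors according to whether they involve `x_k`. Those that do not are bounded
by their majorants (`1` or `ν_e`), and Cauchy–Schwarz with the majorants as weight squares the
average over `x_k` of the remaining factors, that is, it produces a second copy of `x_k`
(`cauchy_schwarz_double`, `doubled_step`). All edges have `r` elements, so no `e ≠ e₁` contains
`e₁`; hence after all of `e₁` has been treated every `g_e` has been replaced by its majorant, and
what remains is the average of `∏_ω (ν_{e₁}(x^{(ω)}) - 1)` against majorants
(`doubled_iterate`).

No `e ≠ e₁` is contained in `e₁` either, so the copies `ι = 0, 1` of the variables off `e₁` keep the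
factors distinct, and every average that occurs is one of those controlled by the linear forms
condition (`linearForms_glue`). The side averages are therefore at most `2`, and expanding the
product of the `ν_{e₁} - 1` gives `2 ^ 2 ^ r` averages, each within `η` of `1`, with signs that
cancel the main terms. The original average is thus at most a constant times `η ^ (1 / 2 ^ r)`.
-/

open Finset

/-- The average (expectation with respect to the uniform measure) of `f` over `α`. -/
noncomputable def avg {α : Type*} [Fintype α] (f : α → ℝ) : ℝ :=
  (∑ x, f x) / (Fintype.card α)

variable {J : Type} [Fintype J] [DecidableEq J] {V : J → Type}

/-- Restriction (projection) of a full tuple `x ∈ V_J` to the coordinates in `e`. -/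
def restr (e : Finset J) (x : (j : J) → V j) : (i : ↥e) → V i := fun i => x i.1

/-- Projection of a tuple indexed by `e` to the coordinates in the face `e.erase j`. -/
def faceProj {e : Finset J} (j : J) (x : (i : ↥e) → V i) :
    (i : ↥(e.erase j)) → V i :=
  fun i => x ⟨i.1, Finset.mem_of_mem_erase i.2⟩

/-- The product `∏_{f ∈ ∂e} 1_{B_f}(x_f)` of the indicators of the sets `B_f ⊆ V_f`
over the faces `f = e.erase j`, `j ∈ e`, of `e`. -/
noncomputable def faceInd (e : Finset J)
    (B : (j : J) → Set ((i : ↥(e.erase j)) → V i)) (x : (i : ↥e) → V i) : ℝ :=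
  ∏ j ∈ e, Set.indicator (B j) (fun _ => (1 : ℝ)) (faceProj j x)

/-- `(g, g')` is an `ε`-discrepancy pair on the edge `e`: for all choices of
`B_f ⊆ V_f` (`f ∈ ∂e`), `|E[(g(x_e) - g'(x_e)) ∏_{f ∈ ∂e} 1_{B_f}(x_f)]| ≤ ε`. -/
noncomputable def EdgeDiscrepancy [∀ j, Fintype (V j)] (e : Finset J)
    (g g' : ((i : ↥e) → V i) → ℝ) (ε : ℝ) : Prop :=
  ∀ B : (j : J) → Set ((i : ↥(e.erase j)) → V i),
    |avg (fun x : (i : ↥e) → V i => (g x - g' x) * faceInd e B x)| ≤ ε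

/-- `g` is upper `η`-regular on the edge `e`: for all choices of `B_f ⊆ V_f`
(`f ∈ ∂e`), `E[(g(x_e) - 1) ∏_{f ∈ ∂e} 1_{B_f}(x_f)] ≤ η`. -/
noncomputable def EdgeUpperRegular [∀ j, Fintype (V j)] (e : Finset J)
    (g : ((i : ↥e) → V i) → ℝ) (η : ℝ) : Prop :=
  ∀ B : (j : J) → Set ((i : ↥(e.erase j)) → V i),
    avg (fun x : (i : ↥e) → V i => (g x - 1) * faceInd e B x) ≤ η

/-- `E ⊆ V_e` is the set of `r`-cliques of some `(r-1)`-uniform hypergraph: there are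
sets `B_f ⊆ V_f` for the faces `f ∈ ∂e` with `1_E(x_e) = ∏_{f ∈ ∂e} 1_{B_f}(x_f)`. -/
def IsCliqueSet (e : Finset J) (E : Set ((i : ↥e) → V i)) : Prop :=
  ∃ B : (j : J) → Set ((i : ↥(e.erase j)) → V i),
    ∀ x, x ∈ E ↔ ∀ j ∈ e, faceProj j x ∈ B j

/-- `E ⊆ V_e` has complexity at most `T`: it can be partitioned into `T` (possibly
empty) clique sets. -/
def ComplexityLE (e : Finset J) (E : Set ((i : ↥e) → V i)) (T : ℕ) : Prop :=
  ∃ P : Fin T → Set ((i : ↥e) → V i),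
    (∀ i, IsCliqueSet e (P i)) ∧
    (∀ i₁ i₂, i₁ ≠ i₂ → P i₁ ∩ P i₂ = ∅) ∧
    (⋃ i, P i) = E

/-- The weighted hypergraph `ν` satisfies the `H`-linear forms condition within `η`:
for every choice of exponents `n (e, ω) ∈ {0,1}` (`e ∈ H`, `ω ∈ {0,1}^e`),
`|E[∏_{e ∈ H} ∏_{ω ∈ {0,1}^e} ν_e(x_e^{(ω)})^{n_{e,ω}} | x⁰, x¹ ∈ V_J] - 1| ≤ η`. -/
noncomputable def HLinearForms [∀ j, Fintype (V j)] (H : Finset (Finset J))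
    (ν : (e : Finset J) → ((i : ↥e) → V i) → ℝ) (η : ℝ) : Prop :=
  ∀ n : (e : Finset J) → (↥e → Bool) → Bool,
    |avg (fun x : ((j : J) → V j) × ((j : J) → V j) =>
      ∏ e ∈ H, ∏ ω : ↥e → Bool,
        if n e ω then ν e (fun i => if ω i then x.2 i.1 else x.1 i.1) else 1) - 1| ≤ η

/-! ### Uniform averages -/

lemma avg_const {α : Type*} [Fintype α] [Nonempty α] (c : ℝ) : avg (fun _ : α => c) = c := by
  simp [avg]

lemma avg_mul_left {α : Type*} [Fintype α] (c : ℝ) (f : α → ℝ) :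
    avg (fun x => c * f x) = c * avg f := by
  simp only [avg, ← Finset.mul_sum, mul_div_assoc]

lemma avg_sum {α ι : Type*} [Fintype α] (s : Finset ι) (f : ι → α → ℝ) :
    avg (fun x => ∑ i ∈ s, f i x) = ∑ i ∈ s, avg (f i) := by
  simp only [avg]
  rw [Finset.sum_comm, Finset.sum_div]

lemma avg_prod_type {α β : Type*} [Fintype α] [Fintype β] (f : α × β → ℝ) :
    avg f = avg (fun a => avg (fun b => f (a, b))) := by
  simp only [avg, Fintype.card_prod, Fintype.sum_prod_type, Nat.cast_mul]
  rw [← Finset.sum_div, div_div, mul_comm (Fintype.card β : ℝ)]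

lemma avg_equiv {α β : Type*} [Fintype α] [Fintype β] (σ : α ≃ β) (f : β → ℝ) :
    avg (fun x => f (σ x)) = avg f := by
  simp only [avg, Fintype.card_congr σ, Equiv.sum_comp σ f]

/-- If `σ` is an involution of `α × β`, then the first coordinate of `σ p` is uniform on `α` when `p` is
uniform. This is how resampling and gluing of coordinates are seen to preserve averages. -/
lemma avg_fst_involutive {α β : Type*} [Fintype α] [Fintype β] [Nonempty β]
    (σ : α × β → α × β) (hσ : Function.Involutive σ) (F : α → ℝ) :
    avg F = avg (fun p : α × β => F (σ p).1) := by
  have h := avg_equiv hσ.toPerm (fun p : α × β => F p.1)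
  simp only [Function.Involutive.coe_toPerm] at h
  rw [h, avg_prod_type]
  simp only [avg_const]

/-! ### Doubling variables by Cauchy–Schwarz -/

/-- Weighted Cauchy–Schwarz: a factor `a` dominated by `b` is replaced by `b`. -/
lemma avg_sq_le {α : Type*} [Fintype α] (a b m : α → ℝ) (ha : ∀ x, 0 ≤ a x)
    (hab : ∀ x, a x ≤ b x) :
    (avg (fun x => a x * m x)) ^ 2 ≤ avg b * avg (fun x => b x * m x ^ 2) := by
  have key : (∑ x, a x * m x) ^ 2 ≤ (∑ x, b x) * ∑ x, b x * m x ^ 2 := by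
    refine Finset.sum_sq_le_sum_mul_sum_of_sq_le_mul _ (fun x _ => (ha x).trans (hab x))
      (fun x _ => mul_nonneg ((ha x).trans (hab x)) (sq_nonneg _)) (fun x _ => ?_)
    have h2 : a x ^ 2 ≤ b x ^ 2 := pow_le_pow_left₀ (ha x) (hab x) 2
    nlinarith [mul_le_mul_of_nonneg_right h2 (sq_nonneg (m x))]
  simp only [avg, div_pow, div_mul_div_comm, ← sq]
  gcongr

/-- The Cauchy–Schwarz step that doubles one variable. Here `u` resamples the variable to be
doubled, `u'` resamples the (so far unused) second copy of it, and `d` replaces the first copy by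
the second. The factor `a ≤ b` does not involve the variable, `c` does. -/
lemma cauchy_schwarz_double {Ω Y : Type*} [Fintype Ω] [Fintype Y] [Nonempty Y]
    (a b c : Ω → ℝ) (u u' : Ω → Y → Ω) (d : Ω → Ω)
    (ha : ∀ w, 0 ≤ a w) (hab : ∀ w, a w ≤ b w)
    (hu : ∀ F : Ω → ℝ, avg F = avg (fun w => avg (fun y => F (u w y))))
    (hu' : ∀ F : Ω → ℝ, avg F = avg (fun w => avg (fun y => F (u' w y))))
    (hau : ∀ w y, a (u w y) = a w) (hbu : ∀ w y, b (u w y) = b w)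
    (hbu' : ∀ w y, b (u' w y) = b w) (hcu' : ∀ w y, c (u' w y) = c w)
    (hd : ∀ w y y', c (d (u' (u w y) y')) = c (u w y')) :
    (avg (fun w => a w * c w)) ^ 2 ≤ avg b * avg (fun w => b w * (c w * c (d w))) := by
  have h1 : avg (fun w => a w * c w) = avg (fun w => a w * avg (fun y => c (u w y))) := by
    rw [hu]
    simp only [hau, avg_mul_left]
  have h2 : avg (fun w => b w * (c w * c (d w)))
      = avg (fun w => b w * (avg (fun y => c (u w y))) ^ 2) := by
    rw [hu', hu]
    simp only [hbu', hbu, hcu', hd, avg_mul_left]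
    congr 1
    funext w
    congr 1
    simp only [mul_comm _ (avg _), avg_mul_left, sq]
  rw [h1, h2]
  exact avg_sq_le _ _ _ ha hab

/-- The point `x^{(A)}`: coordinates in `A` come from the second copy, the others from the first. -/
def mix (A : Finset J) (p : ((j : J) → V j) × ((j : J) → V j)) : (j : J) → V j :=
  fun j => if j ∈ A then p.2 j else p.1 j

section Doubling

variable [∀ j, Fintype (V j)] [∀ j, Nonempty (V j)] {Z I : Type} [Fintype Z]

/-- The average reached once the variables in `S` have been doubled. The function indexed by `i`
depends only on the variables in `s i`; it is still `G i` if it depends on all of `S`, and has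
been replaced by its majorant `N i` otherwise. -/
noncomputable def doubled (f : ((j : J) → V j) → ℝ) (R : Finset I) (s : I → Finset J)
    (G N : I → ((j : J) → V j) → Z → ℝ) (S : Finset J) : ℝ :=
  avg (fun w : (((j : J) → V j) × ((j : J) → V j)) × Z =>
    (∏ A ∈ S.powerset, f (mix A w.1)) *
      ∏ i ∈ R, ∏ A ∈ (S ∩ s i).powerset, (if S ⊆ s i then G i else N i) (mix A w.1) w.2)

/-- One more variable `k` is doubled; the factors not involving it are replaced by their majorants,
whose average is the price paid. -/
lemma doubled_step (f : ((j : J) → V j) → ℝ) (R : Finset I) (s : I → Finset J)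
    (G N : I → ((j : J) → V j) → Z → ℝ)
    (hG0 : ∀ i ∈ R, ∀ x z, 0 ≤ G i x z) (hGN : ∀ i ∈ R, ∀ x z, G i x z ≤ N i x z)
    (hGs : ∀ i ∈ R, ∀ x x' z, (∀ j ∈ s i, x j = x' j) → G i x z = G i x' z)
    (hNs : ∀ i ∈ R, ∀ x x' z, (∀ j ∈ s i, x j = x' j) → N i x z = N i x' z)
    (S : Finset J) (k : J) (hk : k ∉ S) :
    (doubled f R s G N S) ^ 2 ≤
      avg (fun w : (((j : J) → V j) × ((j : J) → V j)) × Z =>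
        ∏ i ∈ R with k ∉ s i, ∏ A ∈ (S ∩ s i).powerset, N i (mix A w.1) w.2) *
      doubled f R s G N (insert k S) := by
  classical
  set M : I → ((j : J) → V j) → Z → ℝ := fun i => if S ⊆ s i then G i else N i with hM
  have hM0 : ∀ i ∈ R, ∀ x z, 0 ≤ M i x z := by
    intro i hi x z
    simp only [hM]; split_ifs
    · exact hG0 i hi x z
    · exact (hG0 i hi x z).trans (hGN i hi x z)
  have hMN : ∀ i ∈ R, ∀ x z, M i x z ≤ N i x z := by
    intro i hi x z
    simp only [hM]; split_ifs
    · exact hGN i hi x z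
    · exact le_rfl
  have hMs : ∀ i ∈ R, ∀ x x' z, (∀ j ∈ s i, x j = x' j) → M i x z = M i x' z := by
    intro i hi x x' z h
    simp only [hM]; split_ifs
    · exact hGs i hi x x' z h
    · exact hNs i hi x x' z h
  let Ω := (((j : J) → V j) × ((j : J) → V j)) × Z
  let u : Ω → V k → Ω := fun w y => ((Function.update w.1.1 k y, w.1.2), w.2)
  let u' : Ω → V k → Ω := fun w y => ((w.1.1, Function.update w.1.2 k y), w.2)
  let d : Ω → Ω := fun w => ((Function.update w.1.1 k (w.1.2 k), w.1.2), w.2)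
  let a : Ω → ℝ := fun w => ∏ i ∈ R with k ∉ s i, ∏ A ∈ (S ∩ s i).powerset, M i (mix A w.1) w.2
  let b : Ω → ℝ := fun w => ∏ i ∈ R with k ∉ s i, ∏ A ∈ (S ∩ s i).powerset, N i (mix A w.1) w.2
  let c : Ω → ℝ := fun w => (∏ A ∈ S.powerset, f (mix A w.1)) *
    ∏ i ∈ R with ¬ k ∉ s i, ∏ A ∈ (S ∩ s i).powerset, M i (mix A w.1) w.2
  have hu : ∀ F : Ω → ℝ, avg F = avg (fun w => avg (fun y => F (u w y))) := by
    intro F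
    rw [avg_fst_involutive (fun p : Ω × V k => (u p.1 p.2, p.1.1.1 k))
      (fun p => by simp [u]) F, avg_prod_type]
  have hu' : ∀ F : Ω → ℝ, avg F = avg (fun w => avg (fun y => F (u' w y))) := by
    intro F
    rw [avg_fst_involutive (fun p : Ω × V k => (u' p.1 p.2, p.1.1.2 k))
      (fun p => by simp [u']) F, avg_prod_type]
  -- resampling or copying coordinate `k` changes the mixed points in that coordinate only
  have hmu : ∀ (w : Ω) y A j, j ≠ k → mix A (u w y).1 j = mix A w.1 j := by
    intro w y A j hj; simp [mix, u, hj]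
  have hmu' : ∀ (w : Ω) y A j, j ≠ k → mix A (u' w y).1 j = mix A w.1 j := by
    intro w y A j hj; simp [mix, u', hj]
  have hmc : ∀ (w : Ω) y A, k ∉ A → mix A (u' w y).1 = mix A w.1 := by
    intro w y A hA; funext j
    by_cases hj : j = k
    · subst hj; simp [mix, u', hA]
    · exact hmu' w y A j hj
  have hmd : ∀ (w : Ω) A, k ∉ A → mix A (d w).1 = mix (insert k A) w.1 := by
    intro w A hA; funext j
    by_cases hj : j = k
    · subst hj; simp [mix, d, hA]
    · simp [mix, d, hj]
  have hkA : ∀ (T A : Finset J), A ∈ (S ∩ T).powerset → k ∉ A := fun T A hA h =>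
    hk (Finset.mem_of_mem_inter_left (Finset.mem_powerset.1 hA h))
  have hkS : ∀ A : Finset J, A ∈ S.powerset → k ∉ A := fun A hA h =>
    hk (Finset.mem_powerset.1 hA h)
  have hne : ∀ i, k ∉ s i → ∀ j ∈ s i, j ≠ k := fun i hi j hj h => hi (h ▸ hj)
  have hCS := cauchy_schwarz_double a b c u u' d ?_ ?_ hu hu' ?_ ?_ ?_ ?_ ?_
  · have e1 : doubled f R s G N S = avg (fun w => a w * c w) := by
      simp only [doubled, a, c]
      congr 1
      funext w
      rw [← Finset.prod_filter_mul_prod_filter_not R (fun i => k ∉ s i)]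
      simp only [hM]
      ring
    have e2 : doubled f R s G N (insert k S) = avg (fun w => b w * (c w * c (d w))) := by
      simp only [doubled, b, c]
      congr 1
      funext w
      rw [← Finset.prod_filter_mul_prod_filter_not R (fun i => k ∉ s i),
        Finset.prod_powerset_insert hk]
      have p1 : ∏ i ∈ R with k ∉ s i, ∏ A ∈ (insert k S ∩ s i).powerset,
            (if insert k S ⊆ s i then G i else N i) (mix A w.1) w.2
          = ∏ i ∈ R with k ∉ s i, ∏ A ∈ (S ∩ s i).powerset, N i (mix A w.1) w.2 := by
        refine Finset.prod_congr rfl fun i hi => ?_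
        have hki := (Finset.mem_filter.1 hi).2
        rw [Finset.insert_inter_of_notMem hki,
          if_neg (fun h => hki (h (Finset.mem_insert_self k S)))]
      have p2 : ∏ i ∈ R with ¬ k ∉ s i, ∏ A ∈ (insert k S ∩ s i).powerset,
            (if insert k S ⊆ s i then G i else N i) (mix A w.1) w.2
          = (∏ i ∈ R with ¬ k ∉ s i, ∏ A ∈ (S ∩ s i).powerset, M i (mix A w.1) w.2) *
            ∏ i ∈ R with ¬ k ∉ s i, ∏ A ∈ (S ∩ s i).powerset, M i (mix A (d w).1) (d w).2 := by
        rw [← Finset.prod_mul_distrib]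
        refine Finset.prod_congr rfl fun i hi => ?_
        have hki := not_not.1 (Finset.mem_filter.1 hi).2
        have hif : (if insert k S ⊆ s i then G i else N i) = M i := by
          simp only [hM, Finset.insert_subset_iff, hki, true_and]
        rw [hif, Finset.insert_inter_of_mem hki, Finset.prod_powerset_insert
          (fun h => hk (Finset.mem_of_mem_inter_left h))]
        congr 1
        refine Finset.prod_congr rfl fun A hA => ?_
        rw [hmd w A (hkA _ A hA)]
      have p3 : ∏ A ∈ S.powerset, f (mix A (d w).1)
          = ∏ A ∈ S.powerset, f (mix (insert k A) w.1) :=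
        Finset.prod_congr rfl fun A hA => by rw [hmd w A (hkS A hA)]
      rw [p1, p2, p3]
      ring
    rw [e1, e2]
    exact hCS
  · intro w
    exact Finset.prod_nonneg fun i hi => Finset.prod_nonneg fun A _ =>
      hM0 i (Finset.mem_filter.1 hi).1 _ _
  · intro w
    exact Finset.prod_le_prod (fun i hi => Finset.prod_nonneg fun A _ =>
      hM0 i (Finset.mem_filter.1 hi).1 _ _) fun i hi =>
      Finset.prod_le_prod (fun A _ => hM0 i (Finset.mem_filter.1 hi).1 _ _) fun A _ =>
        hMN i (Finset.mem_filter.1 hi).1 _ _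
  · intro w y
    refine Finset.prod_congr rfl fun i hi => Finset.prod_congr rfl fun A _ => ?_
    obtain ⟨hi, hki⟩ := Finset.mem_filter.1 hi
    exact hMs i hi _ _ _ fun j hj => hmu w y A j (hne i hki j hj)
  · intro w y
    refine Finset.prod_congr rfl fun i hi => Finset.prod_congr rfl fun A _ => ?_
    obtain ⟨hi, hki⟩ := Finset.mem_filter.1 hi
    exact hNs i hi _ _ _ fun j hj => hmu w y A j (hne i hki j hj)
  · intro w y
    refine Finset.prod_congr rfl fun i hi => Finset.prod_congr rfl fun A _ => ?_
    obtain ⟨hi, hki⟩ := Finset.mem_filter.1 hi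
    exact hNs i hi _ _ _ fun j hj => hmu' w y A j (hne i hki j hj)
  · intro w y
    simp only [c]
    congr 1
    · exact Finset.prod_congr rfl fun A hA => by rw [hmc w y A (hkS A hA)]
    · refine Finset.prod_congr rfl fun i _ => Finset.prod_congr rfl fun A hA => ?_
      rw [hmc w y A (hkA _ A hA)]
  · intro w y y'
    have hpt : ∀ A, k ∉ A → mix A (d (u' (u w y) y')).1 = mix A (u w y').1 := by
      intro A hA; funext j
      by_cases hj : j = k
      · subst hj; simp [mix, d, u', u, hA]
      · simp [mix, d, u', u, hj]
    simp only [c]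
    congr 1
    · exact Finset.prod_congr rfl fun A hA => by rw [hpt A (hkS A hA)]
    · refine Finset.prod_congr rfl fun i _ => Finset.prod_congr rfl fun A hA => ?_
      rw [hpt A (hkA _ A hA)]

/-- Iterating `doubled_step`, with the side averages bounded by `2`; the normalization by `1/2`
makes the inequality close up under squaring. -/
lemma doubled_iterate (f : ((j : J) → V j) → ℝ) (R : Finset I) (s : I → Finset J)
    (G N : I → ((j : J) → V j) → Z → ℝ)
    (hG0 : ∀ i ∈ R, ∀ x z, 0 ≤ G i x z) (hGN : ∀ i ∈ R, ∀ x z, G i x z ≤ N i x z)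
    (hGs : ∀ i ∈ R, ∀ x x' z, (∀ j ∈ s i, x j = x' j) → G i x z = G i x' z)
    (hNs : ∀ i ∈ R, ∀ x x' z, (∀ j ∈ s i, x j = x' j) → N i x z = N i x' z)
    (E : Finset J)
    (hside : ∀ S ⊆ E, ∀ k, |avg (fun w : (((j : J) → V j) × ((j : J) → V j)) × Z =>
        ∏ i ∈ R with k ∉ s i, ∏ A ∈ (S ∩ s i).powerset, N i (mix A w.1) w.2)| ≤ 2) :
    ∀ S ⊆ E, |doubled f R s G N ∅ / 2| ^ (2 ^ S.card) ≤ |doubled f R s G N S / 2| := by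
  intro S
  induction S using Finset.induction_on with
  | empty => simp
  | insert k S hk ih =>
    intro hS
    have hSE : S ⊆ E := (Finset.subset_insert k S).trans hS
    rw [Finset.card_insert_of_notMem hk, pow_succ, pow_mul]
    refine (pow_le_pow_left₀ (by positivity) (ih hSE) 2).trans ?_
    have h := doubled_step f R s G N hG0 hGN hGs hNs S k hk
    have h2 := hside S hSE k
    rw [sq_abs, div_pow, abs_div, abs_two]
    have h3 := (le_abs_self _).trans ((abs_mul _ _).le.trans
      (mul_le_mul_of_nonneg_right h2 (abs_nonneg (doubled f R s G N (insert k S)))))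
    linarith [h.trans h3]

end Doubling

/-! ### The linear forms condition on the doubled system -/

/-- The linear forms condition, with the chosen factors given as a set `P` of pairs `(e, A)`,
where `A ⊆ e` is the set of coordinates taken from the second copy. -/
lemma linearForms_pairs [∀ j, Fintype (V j)] {H : Finset (Finset J)}
    {ν : (e : Finset J) → ((i : ↥e) → V i) → ℝ} {η : ℝ} (h : HLinearForms H ν η)
    (P : Finset (Finset J × Finset J)) (hP : ∀ p ∈ P, p.1 ∈ H ∧ p.2 ⊆ p.1) :
    |avg (fun u : ((j : J) → V j) × ((j : J) → V j) =>
      ∏ p ∈ P, ν p.1 (restr p.1 (mix p.2 u))) - 1| ≤ η := by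
  classical
  let img : (e : Finset J) → (↥e → Bool) → Finset J := fun e ω =>
    (univ.filter (fun i : ↥e => ω i = true)).map (Function.Embedding.subtype _)
  have himg : ∀ (e : Finset J) (ω : ↥e → Bool) (i : ↥e), i.1 ∈ img e ω ↔ ω i = true := by
    intro e ω i
    simp [img]
  have himg' : ∀ (e : Finset J) (ω : ↥e → Bool), img e ω ⊆ e := by
    intro e ω j hj
    simp only [img, Finset.mem_map] at hj
    obtain ⟨i, _, rfl⟩ := hj
    exact i.2
  have himgA : ∀ (e A : Finset J), A ⊆ e → img e (fun i => decide (i.1 ∈ A)) = A := by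
    intro e A hA
    ext j
    constructor
    · intro hj
      simpa using (himg e _ ⟨j, himg' _ _ hj⟩).1 hj
    · intro hj
      exact (himg e _ ⟨j, hA hj⟩).2 (by simpa using hj)
  have key := h (fun e ω => decide ((e, img e ω) ∈ P))
  convert key using 5 with u
  rw [← Finset.prod_fiberwise_of_maps_to (t := H) (g := Prod.fst) (fun p hp => (hP p hp).1)]
  refine Finset.prod_congr rfl fun e he => ?_
  simp only [decide_eq_true_eq]
  rw [← Finset.prod_filter]
  refine Finset.prod_bij' (fun p _ => fun i : ↥e => decide (i.1 ∈ p.2))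
    (fun ω _ => (e, img e ω)) ?_ ?_ ?_ ?_ ?_
  · rintro ⟨e', A⟩ hp
    obtain ⟨hpP, rfl⟩ := Finset.mem_filter.1 hp
    simpa [himgA e' A (hP (e', A) hpP).2] using hpP
  · intro ω hω
    simpa using hω
  · rintro ⟨e', A⟩ hp
    obtain ⟨hpP, rfl⟩ := Finset.mem_filter.1 hp
    simp only [himgA e' A (hP (e', A) hpP).2]
  · intro ω hω
    funext i
    simp only [himg, Bool.decide_eq_true]
  · rintro ⟨e', A⟩ hp
    obtain ⟨hpP, rfl⟩ := Finset.mem_filter.1 hp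
    congr 1
    funext i
    simp [restr, mix]

/-- The point `x^{(ι)}` of the theorem: `x` on `e₁`, and the `ι`-th component of `z` off `e₁`. -/
def glue (e₁ : Finset J) (ι : Bool) (x : (j : J) → V j)
    (z : ((j : J) → V j) × ((j : J) → V j)) : (j : J) → V j :=
  fun j => if j ∈ e₁ then x j else if ι then z.2 j else z.1 j

/-- All averages produced by the Cauchy–Schwarz argument are close to `1`. An edge `e ≠ e₁` is
not contained in `e₁`, so the points for `ι = 0` and `ι = 1` differ as choices of copies and each
factor occurs only once. -/
lemma linearForms_glue [∀ j, Fintype (V j)] [∀ j, Nonempty (V j)] {H : Finset (Finset J)}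
    {ν : (e : Finset J) → ((i : ↥e) → V i) → ℝ} {η : ℝ} (h : HLinearForms H ν η)
    {e₁ : Finset J} (he₁ : e₁ ∈ H) (hsub : ∀ e ∈ H, e ≠ e₁ → ¬ e ⊆ e₁)
    (B : Finset (Finset J)) (hB : ∀ A ∈ B, A ⊆ e₁)
    (R : Finset (Bool × Finset J)) (hR : ∀ i ∈ R, i.2 ∈ H ∧ i.2 ≠ e₁)
    (S : Finset J) (hS : S ⊆ e₁) :
    |avg (fun w : (((j : J) → V j) × ((j : J) → V j)) × (((j : J) → V j) × ((j : J) → V j)) =>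
      (∏ A ∈ B, ν e₁ (restr e₁ (mix A w.1))) *
        ∏ i ∈ R, ∏ A ∈ (S ∩ i.2).powerset,
          ν i.2 (restr i.2 (glue e₁ i.1 (mix A w.1) w.2))) - 1| ≤ η := by
  classical
  let top : Bool → Finset J → Finset J := fun ι e => if ι then e \ e₁ else ∅
  let T := R.sigma (fun i => (S ∩ i.2).powerset)
  let φ : (Σ _ : Bool × Finset J, Finset J) → Finset J × Finset J :=
    fun q => (q.1.2, q.2 ∪ top q.1.1 q.1.2)
  let P₁ := B.image (fun A => (e₁, A))
  let P₂ := T.image φ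
  have hT : ∀ q ∈ T, q.1 ∈ R ∧ q.2 ⊆ S ∩ q.1.2 := by
    intro q hq
    obtain ⟨h1, h2⟩ := Finset.mem_sigma.1 hq
    exact ⟨h1, Finset.mem_powerset.1 h2⟩
  have htop : ∀ ι e, top ι e ⊆ e \ e₁ := by
    intro ι e; simp only [top]; split_ifs <;> simp
  have hφ : Set.InjOn φ T := by
    rintro ⟨⟨ι, e⟩, A⟩ hq ⟨⟨ι', e'⟩, A'⟩ hq' heq
    obtain ⟨hi, hA⟩ := hT _ hq
    obtain ⟨hi', hA'⟩ := hT _ hq'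
    simp only [φ, Prod.mk.injEq] at heq
    obtain ⟨rfl, hu⟩ := heq
    simp only at hA hA' hi
    have hAe : ∀ {j}, j ∈ A → j ∈ e₁ := fun hj => hS (Finset.mem_of_mem_inter_left (hA hj))
    have hAe' : ∀ {j}, j ∈ A' → j ∈ e₁ := fun hj => hS (Finset.mem_of_mem_inter_left (hA' hj))
    have h1 : A = A' := by
      ext j
      have := congrArg (fun s => j ∈ s) hu
      have t1 := @htop ι e j
      have t2 := @htop ι' e j
      simp only [Finset.mem_union, Finset.mem_sdiff, eq_iff_iff] at this t1 t2
      have a1 := @hAe j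
      have a2 := @hAe' j
      tauto
    obtain ⟨j, hje, hj⟩ := Finset.not_subset.1 (hsub e (hR _ hi).1 (hR _ hi).2)
    have h2 : ι = ι' := by
      have := congrArg (fun s => j ∈ s) hu
      have a1 : j ∉ A := fun h => hj (hAe h)
      have a2 : j ∉ A' := fun h => hj (hAe' h)
      cases ι <;> cases ι' <;> simp_all [top]
    subst h1 h2
    rfl
  have hdisj : Disjoint P₁ P₂ := by
    rw [Finset.disjoint_left]
    intro p hp hp'
    obtain ⟨A, _, rfl⟩ := Finset.mem_image.1 hp
    obtain ⟨q, hq, hqe⟩ := Finset.mem_image.1 hp'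
    exact (hR _ (hT q hq).1).2 (congrArg Prod.fst hqe)
  have hP : ∀ p ∈ P₁ ∪ P₂, p.1 ∈ H ∧ p.2 ⊆ p.1 := by
    intro p hp
    rcases Finset.mem_union.1 hp with hp | hp
    · obtain ⟨A, hA, rfl⟩ := Finset.mem_image.1 hp
      exact ⟨he₁, hB A hA⟩
    · obtain ⟨q, hq, rfl⟩ := Finset.mem_image.1 hp
      obtain ⟨h1, h2⟩ := hT q hq
      exact ⟨(hR _ h1).1, Finset.union_subset (h2.trans Finset.inter_subset_right)
        ((htop _ _).trans Finset.sdiff_subset)⟩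
  have key := linearForms_pairs h (P₁ ∪ P₂) hP
  -- exchanging the coordinates off `e₁` of the two pairs is a measure-preserving involution
  let σ : (((j : J) → V j) × ((j : J) → V j)) × (((j : J) → V j) × ((j : J) → V j)) →
      (((j : J) → V j) × ((j : J) → V j)) × (((j : J) → V j) × ((j : J) → V j)) := fun w =>
    ((fun j => if j ∈ e₁ then w.1.1 j else w.2.1 j, fun j => if j ∈ e₁ then w.1.2 j else w.2.2 j),
     (fun j => if j ∈ e₁ then w.2.1 j else w.1.1 j, fun j => if j ∈ e₁ then w.2.2 j else w.1.2 j))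
  have hσ : Function.Involutive σ := by
    intro w
    refine Prod.ext (Prod.ext ?_ ?_) (Prod.ext ?_ ?_) <;> funext j <;>
      by_cases hj : j ∈ e₁ <;> simp [σ, hj]
  rw [avg_fst_involutive σ hσ] at key
  convert key using 4 with w
  funext w
  rw [Finset.prod_union hdisj, Finset.prod_image (fun A _ A' _ hAA => (Prod.mk.inj hAA).2),
    Finset.prod_image hφ, Finset.prod_sigma]
  congr 1
  · refine Finset.prod_congr rfl fun A _ => ?_
    congr 1
    funext i
    simp [restr, mix, σ]
  · refine Finset.prod_congr rfl fun q hq => Finset.prod_congr rfl fun A hA => ?_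
    have hA' : ∀ j ∈ A, j ∈ e₁ := fun j hj =>
      hS (Finset.mem_of_mem_inter_left (Finset.mem_powerset.1 hA hj))
    obtain ⟨ι, e⟩ := q
    simp only [φ]
    congr 1
    funext i
    by_cases hi : i.1 ∈ e₁
    · cases ι <;> simp [restr, mix, σ, glue, hi, top]
    · have hiA : i.1 ∉ A := fun h => hi (hA' _ h)
      cases ι <;> simp [restr, mix, σ, glue, hi, hiA, top]

/-- **Strong linear forms.** For every `γ > 0` and finite `J` there exists `η > 0` such
that: for every hypergraph system `(J, (V_j), r, H)`, every weighted hypergraph `ν`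
satisfying the `H`-linear forms condition within `η`, every `e₁ ∈ H`, and all functions
`g_e^{(ι)} : V_e → ℝ≥0` (`ι ∈ {0,1}`, `e ∈ H ∖ {e₁}`) with each `g_e^{(ι)} ≤ 1` or
`g_e^{(ι)} ≤ ν_e` pointwise, one has
`|E[(ν_{e₁}(x_{e₁}) - 1) ∏_{ι} ∏_{e ∈ H ∖ {e₁}} g_e^{(ι)}(x_e^{(ι)})]| ≤ γ`,
the expectation being over independent uniform `x_j^{(0)}, x_j^{(1)} ∈ V_j` for
`j ∈ J ∖ e₁` and a single uniform `x_j ∈ V_j` for `j ∈ e₁`. Here this expectation is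
realized as an average over triples `(y, z⁰, z¹) ∈ V_J³`, with
`x^{(ι)}_j := y j` for `j ∈ e₁` and `x^{(ι)}_j := z^{(ι)} j` for `j ∉ e₁`. -/
theorem strong_linear_forms (γ : ℝ) (hγ : 0 < γ)
    (J : Type) [Fintype J] [DecidableEq J] :
    ∃ η : ℝ, 0 < η ∧
    ∀ (V : J → Type) [∀ j, Fintype (V j)] [∀ j, Nonempty (V j)]
      (r : ℕ), 1 ≤ r → ∀ H : Finset (Finset J), (∀ e ∈ H, e.card = r) →
      ∀ ν : (e : Finset J) → ((i : ↥e) → V i) → ℝ,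
      (∀ e ∈ H, ∀ x, 0 ≤ ν e x) →
      HLinearForms H ν η →
      ∀ e₁ ∈ H,
      ∀ g : Bool → (e : Finset J) → ((i : ↥e) → V i) → ℝ,
      (∀ ι : Bool, ∀ e ∈ H, e ≠ e₁ → (∀ x, 0 ≤ g ι e x) ∧
        ((∀ x, g ι e x ≤ 1) ∨ (∀ x, g ι e x ≤ ν e x))) →
      |avg (fun t : ((j : J) → V j) × ((j : J) → V j) × ((j : J) → V j) =>
        (ν e₁ (restr e₁ t.1) - 1) *
        ∏ ι : Bool, ∏ e ∈ H.erase e₁,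
          g ι e (restr e (fun j => if j ∈ e₁ then t.1 j
            else if ι then t.2.2 j else t.2.1 j)))| ≤ γ := by
  classical
  set c : ℝ := min 1 (γ / 2) with hc
  have hc0 : 0 < c := lt_min one_pos (by linarith)
  have hc1 : c ≤ 1 := min_le_left _ _
  have hη0 : 0 < (c / 2) ^ (2 ^ Fintype.card J) := by positivity
  have hη1 : (c / 2) ^ (2 ^ Fintype.card J) ≤ 1 := pow_le_one₀ (by positivity) (by linarith)
  refine ⟨(c / 2) ^ (2 ^ Fintype.card J), hη0, ?_⟩
  set η : ℝ := (c / 2) ^ (2 ^ Fintype.card J) with hη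
  intro V _ _ r hr H hH ν hν hLF e₁ he₁ g hg
  have hsub : ∀ e ∈ H, e ≠ e₁ → ¬ e ⊆ e₁ := fun e he hne h =>
    hne (Finset.eq_of_subset_of_card_le h (by rw [hH e he, hH e₁ he₁]))
  have hsup : ∀ e ∈ H, e ≠ e₁ → ¬ e₁ ⊆ e := fun e he hne h =>
    hne (Finset.eq_of_subset_of_card_le h (by rw [hH e he, hH e₁ he₁])).symm
  let R : Finset (Bool × Finset J) := univ ×ˢ H.erase e₁
  have hR : ∀ i ∈ R, i.2 ∈ H ∧ i.2 ≠ e₁ := by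
    intro i hi
    have := (Finset.mem_erase.1 (Finset.mem_product.1 hi).2)
    exact ⟨this.2, this.1⟩
  let f : ((j : J) → V j) → ℝ := fun x => ν e₁ (restr e₁ x) - 1
  let s : Bool × Finset J → Finset J := Prod.snd
  let G : Bool × Finset J → ((j : J) → V j) → (((j : J) → V j) × ((j : J) → V j)) → ℝ :=
    fun i x z => g i.1 i.2 (restr i.2 (glue e₁ i.1 x z))
  let triv : Bool × Finset J → Prop := fun i => ∀ x, g i.1 i.2 x ≤ 1
  let N : Bool × Finset J → ((j : J) → V j) → (((j : J) → V j) × ((j : J) → V j)) → ℝ :=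
    fun i x z => if triv i then 1 else ν i.2 (restr i.2 (glue e₁ i.1 x z))
  have hglue : ∀ (i : Bool × Finset J) (x x' : (j : J) → V j) z, (∀ j ∈ s i, x j = x' j) →
      restr i.2 (glue e₁ i.1 x z) = restr i.2 (glue e₁ i.1 x' z) := by
    intro i x x' z h
    funext j
    simp only [restr, glue, h j.1 j.2]
  -- the linear forms condition for the majorants `N`: the trivial ones drop out of the product
  have hlin : ∀ B : Finset (Finset J), (∀ A ∈ B, A ⊆ e₁) → ∀ R' ⊆ R, ∀ S ⊆ e₁,
      |avg (fun w : (((j : J) → V j) × ((j : J) → V j)) × (((j : J) → V j) × ((j : J) → V j)) =>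
        (∏ A ∈ B, ν e₁ (restr e₁ (mix A w.1))) *
          ∏ i ∈ R', ∏ A ∈ (S ∩ s i).powerset, N i (mix A w.1) w.2) - 1| ≤ η := by
    intro B hB R' hR' S hS
    convert linearForms_glue hLF he₁ hsub B hB (R'.filter (fun i => ¬ triv i))
      (fun i hi => hR i (hR' (Finset.mem_filter.1 hi).1)) S hS using 6 with w
    rw [Finset.prod_filter]
    refine Finset.prod_congr rfl fun i _ => ?_
    by_cases hi : triv i <;> simp [N, hi, s]
  have hit := doubled_iterate f R s G N
    (fun i hi x z => (hg i.1 i.2 (hR i hi).1 (hR i hi).2).1 _)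
    (fun i hi x z => by
      by_cases ht : triv i
      · simp only [N, if_pos ht]; exact ht _
      · simp only [N, if_neg ht]
        exact (hg i.1 i.2 (hR i hi).1 (hR i hi).2).2.resolve_left ht _)
    (fun i _ x x' z h => by simp only [G, hglue i x x' z h])
    (fun i _ x x' z h => by simp only [N, hglue i x x' z h])
    e₁
    (fun S hS k => by
      have h := hlin ∅ (by simp) (R.filter (fun i => k ∉ s i)) (Finset.filter_subset _ _) S hS
      simp only [Finset.prod_empty, one_mul] at h
      rw [abs_le] at h ⊢
      constructor <;> linarith [h.1, h.2])
    e₁ subset_rfl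
  have hend : |doubled f R s G N e₁| ≤ 2 ^ (2 ^ e₁.card) * η := by
    let W : Finset (Finset J) →
        (((j : J) → V j) × ((j : J) → V j)) × (((j : J) → V j) × ((j : J) → V j)) → ℝ :=
      fun B w => (∏ A ∈ B, ν e₁ (restr e₁ (mix A w.1))) *
          ∏ i ∈ R, ∏ A ∈ (e₁ ∩ s i).powerset, N i (mix A w.1) w.2
    let sg : Finset (Finset J) → ℝ := fun B => ∏ A ∈ e₁.powerset \ B, (-1 : ℝ)
    have hexp : doubled f R s G N e₁ = ∑ B ∈ e₁.powerset.powerset, sg B * avg (W B) := by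
      simp only [← avg_mul_left]
      rw [← avg_sum]
      simp only [doubled]
      congr 1
      funext w
      have h1 : ∏ i ∈ R, ∏ A ∈ (e₁ ∩ s i).powerset,
            (if e₁ ⊆ s i then G i else N i) (mix A w.1) w.2
          = ∏ i ∈ R, ∏ A ∈ (e₁ ∩ s i).powerset, N i (mix A w.1) w.2 := by
        refine Finset.prod_congr rfl fun i hi => ?_
        rw [if_neg (hsup i.2 (hR i hi).1 (hR i hi).2)]
      rw [h1]
      simp only [f, sub_eq_add_neg, W]
      rw [Finset.prod_add, Finset.sum_mul]
      refine Finset.sum_congr rfl fun B _ => ?_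
      simp only [sg]
      ring
    have hzero : ∑ B ∈ e₁.powerset.powerset, sg B = 0 := by
      have h := Finset.prod_add (fun _ : Finset J => (1 : ℝ)) (fun _ => -1) e₁.powerset
      simp only [Finset.prod_const_one, one_mul] at h
      rw [← h]
      exact Finset.prod_eq_zero (Finset.empty_mem_powerset e₁) (by norm_num)
    have hdiff : doubled f R s G N e₁
        = ∑ B ∈ e₁.powerset.powerset, sg B * (avg (W B) - 1) := by
      simp only [mul_sub, mul_one, Finset.sum_sub_distrib, hzero, sub_zero, hexp]
    rw [hdiff]
    refine (Finset.abs_sum_le_sum_abs _ _).trans ?_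
    refine (Finset.sum_le_card_nsmul _ _ η fun B hB => ?_).trans ?_
    · have hsg : |sg B| = 1 := by simp [sg]
      rw [abs_mul, hsg, one_mul]
      exact hlin B (fun A hA => Finset.mem_powerset.1 (Finset.mem_powerset.1 hB hA)) R
        subset_rfl e₁ subset_rfl
    · simp [Finset.card_powerset]
  have hstart : avg (fun t : ((j : J) → V j) × ((j : J) → V j) × ((j : J) → V j) =>
        (ν e₁ (restr e₁ t.1) - 1) *
        ∏ ι : Bool, ∏ e ∈ H.erase e₁,
          g ι e (restr e (fun j => if j ∈ e₁ then t.1 j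
            else if ι then t.2.2 j else t.2.1 j))) = doubled f R s G N ∅ := by
    have hm : ∀ w : ((j : J) → V j) × ((j : J) → V j), mix ∅ w = w.1 := by
      intro w; funext j; simp [mix]
    simp only [doubled, Finset.powerset_empty, Finset.prod_singleton, Finset.empty_inter,
      Finset.empty_subset, if_true, hm]
    rw [avg_prod_type, avg_prod_type, avg_prod_type]
    simp only [avg_const, f, G, R, Finset.prod_product]
    rfl
  rw [hstart]
  set q := doubled f R s G N ∅
  have hcard : e₁.card ≤ Fintype.card J := Finset.card_le_univ e₁
  have hpow : 2 ^ e₁.card ≤ 2 ^ Fintype.card J := Nat.pow_le_pow_right (by norm_num) hcard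
  have hq : |q / 2| ^ (2 ^ e₁.card) ≤ c ^ (2 ^ e₁.card) := by
    calc |q / 2| ^ (2 ^ e₁.card) ≤ |doubled f R s G N e₁ / 2| := hit
      _ ≤ |doubled f R s G N e₁| := by
          rw [abs_div, abs_two]; linarith [abs_nonneg (doubled f R s G N e₁)]
      _ ≤ 2 ^ (2 ^ e₁.card) * η := hend
      _ ≤ 2 ^ (2 ^ e₁.card) * (c / 2) ^ (2 ^ e₁.card) := by
          gcongr
          exact pow_le_pow_of_le_one (by positivity) (by linarith) hpow
      _ = c ^ (2 ^ e₁.card) := by rw [← mul_pow]; congr 1; ring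
  have hq' : |q / 2| ≤ c := le_of_pow_le_pow_left₀ (by positivity) hc0.le hq
  rw [abs_div, abs_two] at hq'
  linarith [min_le_right (1 : ℝ) (γ / 2)]
end

section
/- For every δ > 0 there exist η > 0 and N₀ such that the following holds for all N ≥ N₀. Let S ⊆ Z_N × Z_N be nonempty and set ν := (N²/|S|)·1_S. Suppose that |E[∏_{factors in F} ν(·) | x, x', y, y', z, z' ∈ Z_N] − 1| ≤ η for every nonempty subset F of the twelve factors ν(x,y), ν(x',y), ν(x,y'), ν(x',y'), ν(x, z−x), ν(x', z−x'), ν(x, z'−x), ν(x', z'−x'), ν(z−y, y), ν(z−y', y'), ν(z'−y, y), ν(z'−y', y'). Then every subset A ⊆ S containing no corner satisfies |A| ≤ δ|S|. -/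
/-!
Put `f := (N²/|S|)·1_A ≤ ν` and consider the tripartite weighted graph on three copies of `Z_N`
with edge weights `f(x, y)`, `f(z - y, y)`, `f(x, z - x)`. A triangle `(x, y, z)` is a corner with
difference `d = z - x - y`, so if `A` is corner-free then only the trivial triangles `z = x + y`
carry weight and the weighted triangle density is at most `N³/|S|²` (`tri_corner_free`). The linear
forms condition itself forces this to be small for large `N`: the degenerate choice `x = x'`,
`y = y'`, `z = z' = x + y` alone gives `N¹⁸ ≤ 2|S|¹¹` (`card_bound`, `small_of_bound`).

It remains to prove a removal lemma for weighted graphs majorised by a pseudorandom weight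
(`relative_removal`): if the triangle density is small, then a triangle-free graph carries almost
all of the weight of each of the three edge functions. As each point of `A` gives a trivial
triangle, at least one of whose edges is missing from a triangle-free graph, the total mass
`|A|/|S|` of `f` is then at most `δ`. The removal lemma rests on three results.

* `regularity`: a weak regularity lemma. An energy increment argument gives a partition of the
  vertices into boundedly many cells such that averaging `F ≤ ν` over pairs of cells produces `g`
  with `0 ≤ g ≤ 2` and with `F - g` small in cut norm. Cells that are too small are discarded
  (`good`); that `ν - 1` is small in cut norm makes this harmless and bounds `g`.
* `relative_counting`: if each `F_i` is close to the bounded `g_i` in cut norm, then the triangle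
  densities of `F` and `g` are close. This is densification (Conlon, Fox and Zhao): the three
  sparse weights are introduced one at a time (`Counts.step`). By Cauchy–Schwarz, the error made
  with a sparse weight `a` in one place is controlled by the second moment of
  `D(x, y) = 𝔼_z (F₂ F₃ - g₂ g₃)` weighted by `a`; the linear forms condition allows `a` to be
  replaced by `1` (`LF.decouple`), and the unweighted second moment is the counting statement with
  one sparse weight fewer, tested against a truncation of `D`.
* `removal_box`: Mathlib's triangle removal lemma, upgraded so that the triangle-free graph is a
  union of boxes of the partition that carries `g`. This is what allows the removed weight of `F`
  to be compared with that of `g`.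

The bounded model must be majorised by the weight it is compared with, which fails for `g` and
`ν`. Therefore counting is applied to `F/4`, `g/4` and the weight `(1 + ν)/2`, which inherits the
linear forms condition because the averages involved are affine in each of the twelve factors
(`Phi_close`).
-/

open Finset

/-- The twelve factors `ν(x,y), ν(x',y), ν(x,y'), ν(x',y'), ν(x,z-x), ν(x',z-x'),
ν(x,z'-x), ν(x',z'-x'), ν(z-y,y), ν(z-y',y'), ν(z'-y,y), ν(z'-y',y')` appearing in the
linear forms condition for corners. -/
noncomputable def cornerFactors {N : ℕ} [NeZero N] (ν : ZMod N × ZMod N → ℝ)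
    (x x' y y' z z' : ZMod N) : Fin 12 → ℝ :=
  ![ν (x, y), ν (x', y), ν (x, y'), ν (x', y'),
    ν (x, z - x), ν (x', z - x'), ν (x, z' - x), ν (x', z' - x'),
    ν (z - y, y), ν (z - y', y'), ν (z' - y, y), ν (z' - y', y')]

open scoped BigOperators

namespace CornerRel

/-! ### Weighted Cauchy–Schwarz and the linear forms condition -/

section

variable {G : Type*} [Fintype G]

lemma expect_prod {α β : Type*} [Fintype α] [Fintype β] (f : α → β → ℝ) :
    𝔼 p : α × β, f p.1 p.2 = 𝔼 x, 𝔼 y, f x y := by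
  rw [← Finset.univ_product_univ, Finset.expect_product]

/-- Cauchy–Schwarz with a weight `w` majorising `|P|`. -/
lemma wcs {ι : Type*} [Fintype ι] (P w p : ι → ℝ) (h : ∀ i, |P i| ≤ w i) :
    (𝔼 i, P i * p i) ^ 2 ≤ (𝔼 i, w i) * 𝔼 i, w i * p i ^ 2 := by
  have hw : ∀ i, 0 ≤ w i := fun i => (abs_nonneg _).trans (h i)
  simp only [Fintype.expect_eq_sum_div_card]
  rw [div_mul_div_comm, div_pow, ← sq]
  gcongr
  refine Finset.sum_sq_le_sum_mul_sum_of_sq_le_mul _ (fun i _ => hw i)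
    (fun i _ => mul_nonneg (hw i) (sq_nonneg _)) fun i _ => ?_
  have : P i ^ 2 ≤ w i ^ 2 := sq_le_sq' (by linarith [neg_abs_le (P i), h i]) ((le_abs_self _).trans (h i))
  nlinarith [sq_nonneg (p i)]

lemma wcs2 (P w p : G → G → ℝ) (h : ∀ x y, |P x y| ≤ w x y) :
    (𝔼 x, 𝔼 y, P x y * p x y) ^ 2 ≤ (𝔼 x, 𝔼 y, w x y) * 𝔼 x, 𝔼 y, w x y * p x y ^ 2 := by
  have := wcs (fun i : G × G => P i.1 i.2) (fun i => w i.1 i.2) (fun i => p i.1 i.2)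
    (fun i => h _ _)
  rwa [expect_prod (fun x y => P x y * p x y), expect_prod,
    expect_prod (fun x y => w x y * p x y ^ 2)] at this

lemma wcs3 (P w p : G → G → G → ℝ) (h : ∀ x y z, |P x y z| ≤ w x y z) :
    (𝔼 x, 𝔼 y, 𝔼 z, P x y z * p x y z) ^ 2
      ≤ (𝔼 x, 𝔼 y, 𝔼 z, w x y z) * 𝔼 x, 𝔼 y, 𝔼 z, w x y z * p x y z ^ 2 := by
  have := wcs (fun i : G × G × G => P i.1 i.2.1 i.2.2) (fun i => w i.1 i.2.1 i.2.2)
    (fun i => p i.1 i.2.1 i.2.2) (fun i => h _ _ _)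
  rw [expect_prod (fun x (y : G × G) => P x y.1 y.2 * p x y.1 y.2),
    expect_prod (fun x (y : G × G) => w x y.1 y.2),
    expect_prod (fun x (y : G × G) => w x y.1 y.2 * p x y.1 y.2 ^ 2)] at this
  simp only [fun x => expect_prod (fun y z => P x y z * p x y z), fun x => expect_prod (fun y z => w x y z),
    fun x => expect_prod (fun y z => w x y z * p x y z ^ 2)] at this
  exact this

lemma wcs4 (P w p : G → G → G → G → ℝ) (h : ∀ x y z t, |P x y z t| ≤ w x y z t) :
    (𝔼 x, 𝔼 y, 𝔼 z, 𝔼 t, P x y z t * p x y z t) ^ 2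
      ≤ (𝔼 x, 𝔼 y, 𝔼 z, 𝔼 t, w x y z t) * 𝔼 x, 𝔼 y, 𝔼 z, 𝔼 t, w x y z t * p x y z t ^ 2 := by
  have := wcs (fun i : G × G × G × G => P i.1 i.2.1 i.2.2.1 i.2.2.2)
    (fun i => w i.1 i.2.1 i.2.2.1 i.2.2.2) (fun i => p i.1 i.2.1 i.2.2.1 i.2.2.2)
    (fun i => h _ _ _ _)
  rw [expect_prod (fun x (y : G × G × G) => P x y.1 y.2.1 y.2.2 * p x y.1 y.2.1 y.2.2),
    expect_prod (fun x (y : G × G × G) => w x y.1 y.2.1 y.2.2),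
    expect_prod (fun x (y : G × G × G) => w x y.1 y.2.1 y.2.2 * p x y.1 y.2.1 y.2.2 ^ 2)] at this
  simp only [fun x => expect_prod (fun y (z : G × G) => P x y z.1 z.2 * p x y z.1 z.2),
    fun x => expect_prod (fun y (z : G × G) => w x y z.1 z.2),
    fun x => expect_prod (fun y (z : G × G) => w x y z.1 z.2 * p x y z.1 z.2 ^ 2),
    fun x y => expect_prod (fun z t => P x y z t * p x y z t),
    fun x y => expect_prod (fun z t => w x y z t),
    fun x y => expect_prod (fun z t => w x y z t * p x y z t ^ 2)] at this
  exact this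

/-- The average over `x, x₁, y, y₁, z, z₁` of the product over the twelve edges of `K_{2,2,2}`, the
blow-up of a triangle, with a separate function for each edge. The arguments are cyclic: `a` is
evaluated at pairs `(x, y)`, `b` at `(y, z)` and `c` at `(z, x)`. -/
noncomputable def J (a b c : Fin 4 → G → G → ℝ) : ℝ :=
  𝔼 x, 𝔼 x₁, 𝔼 y, 𝔼 y₁, 𝔼 z, 𝔼 z₁,
    (a 0 x y * a 1 x₁ y * a 2 x y₁ * a 3 x₁ y₁) * (b 0 y z * b 1 y₁ z * b 2 y z₁ * b 3 y₁ z₁) *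
      (c 0 z x * c 1 z₁ x * c 2 z x₁ * c 3 z₁ x₁)

/-- The linear forms condition with error `γ` for edge weights `a`, `b`, `c`: every sub-product of
the twelve-fold product has average within `γ` of `1`. Omitted factors are replaced by `1`. -/
def LF (γ : ℝ) (a b c : G → G → ℝ) : Prop :=
  ∀ A B C : Fin 4 → G → G → ℝ, (∀ i, A i = 1 ∨ A i = a) → (∀ i, B i = 1 ∨ B i = b) →
    (∀ i, C i = 1 ∨ C i = c) → |J A B C - 1| ≤ γ

/-- Moving the outermost of several averages to the innermost place. -/
lemma rot3 (f : G → G → G → ℝ) : 𝔼 x, 𝔼 y, 𝔼 z, f x y z = 𝔼 y, 𝔼 z, 𝔼 x, f x y z := by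
  rw [expect_comm]
  refine expect_congr rfl fun _ _ => ?_
  rw [expect_comm]

lemma rot4 (f : G → G → G → G → ℝ) :
    𝔼 x, 𝔼 y, 𝔼 z, 𝔼 t, f x y z t = 𝔼 y, 𝔼 z, 𝔼 t, 𝔼 x, f x y z t := by
  rw [expect_comm]
  exact expect_congr rfl fun _ _ => rot3 _

lemma rot5 (f : G → G → G → G → G → ℝ) :
    𝔼 x, 𝔼 y, 𝔼 z, 𝔼 t, 𝔼 u, f x y z t u = 𝔼 y, 𝔼 z, 𝔼 t, 𝔼 u, 𝔼 x, f x y z t u := by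
  rw [expect_comm]
  refine expect_congr rfl fun _ _ => ?_
  rw [expect_comm]
  refine expect_congr rfl fun _ _ => ?_
  exact rot3 _

lemma rot6 (f : G → G → G → G → G → G → ℝ) :
    𝔼 x, 𝔼 y, 𝔼 z, 𝔼 t, 𝔼 u, 𝔼 v, f x y z t u v
      = 𝔼 y, 𝔼 z, 𝔼 t, 𝔼 u, 𝔼 v, 𝔼 x, f x y z t u v := by
  rw [expect_comm]
  refine expect_congr rfl fun _ _ => ?_
  exact rot5 _

lemma J_rot (a b c : Fin 4 → G → G → ℝ) : J a b c = J b c a := by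
  unfold J
  rw [rot6, rot6]
  refine expect_congr rfl fun x _ => expect_congr rfl fun x' _ => expect_congr rfl fun y _ =>
    expect_congr rfl fun y' _ => expect_congr rfl fun z _ => expect_congr rfl fun z' _ => ?_
  ring

lemma LF.rot {γ : ℝ} {a b c : G → G → ℝ} (h : LF γ a b c) : LF γ b c a := by
  intro B C A hB hC hA
  rw [← J_rot]
  exact h A B C hA hB hC

lemma LF.one {γ : ℝ} {a b c : G → G → ℝ} (h : LF γ a b c) : LF γ 1 b c := by
  intro A B C hA hB hC
  exact h A B C (fun i => Or.inl (by simpa using hA i)) hB hC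

lemma J_sub {a p q : Fin 4 → G → G → ℝ} (b c : Fin 4 → G → G → ℝ)
    (h : ∀ x x' y y', a 0 x y * a 1 x' y * a 2 x y' * a 3 x' y' =
      p 0 x y * p 1 x' y * p 2 x y' * p 3 x' y' - q 0 x y * q 1 x' y * q 2 x y' * q 3 x' y') :
    J a b c = J p b c - J q b c := by
  unfold J
  simp only [← expect_sub_distrib]
  refine expect_congr rfl fun x _ => expect_congr rfl fun x' _ => expect_congr rfl fun y _ =>
    expect_congr rfl fun y' _ => expect_congr rfl fun z _ => expect_congr rfl fun z' _ => ?_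
  rw [h]
  ring

/-- Expanding the four factors `a - 1` gives sixteen averages with signs that cancel, each within
`γ` of `1`. -/
lemma LF.J_sub_one {γ : ℝ} {a b c : G → G → ℝ} (h : LF γ a b c) :
    |J (fun _ => a - 1) (fun _ => b) (fun _ => c)| ≤ 16 * γ := by
  have hB : ∀ i : Fin 4, (fun _ => b : Fin 4 → G → G → ℝ) i = 1 ∨ (fun _ => b : Fin 4 → G → G → ℝ) i = b :=
    fun _ => Or.inr rfl
  have hC : ∀ i : Fin 4, (fun _ => c : Fin 4 → G → G → ℝ) i = 1 ∨ (fun _ => c : Fin 4 → G → G → ℝ) i = c :=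
    fun _ => Or.inr rfl
  have key : ∀ p q r s : G → G → ℝ, (p = 1 ∨ p = a) → (q = 1 ∨ q = a) → (r = 1 ∨ r = a) →
      (s = 1 ∨ s = a) → |J ![p, q, r, s] (fun _ => b) (fun _ => c) - 1| ≤ γ := by
    intro p q r s hp hq hr hs
    refine h _ _ _ (fun i => ?_) hB hC
    fin_cases i <;> assumption
  have s0 : ∀ q r s : G → G → ℝ, J ![a - 1, q, r, s] (fun _ => b) (fun _ => c)
      = J ![a, q, r, s] (fun _ => b) (fun _ => c) - J ![1, q, r, s] (fun _ => b) (fun _ => c) := by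
    intro q r s
    refine J_sub _ _ fun x x' y y' => ?_
    simp
    ring
  have s1 : ∀ q r s : G → G → ℝ, J ![q, a - 1, r, s] (fun _ => b) (fun _ => c)
      = J ![q, a, r, s] (fun _ => b) (fun _ => c) - J ![q, 1, r, s] (fun _ => b) (fun _ => c) := by
    intro q r s
    refine J_sub _ _ fun x x' y y' => ?_
    simp
    ring
  have s2 : ∀ q r s : G → G → ℝ, J ![q, r, a - 1, s] (fun _ => b) (fun _ => c)
      = J ![q, r, a, s] (fun _ => b) (fun _ => c) - J ![q, r, 1, s] (fun _ => b) (fun _ => c) := by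
    intro q r s
    refine J_sub _ _ fun x x' y y' => ?_
    simp
    ring
  have s3 : ∀ q r s : G → G → ℝ, J ![q, r, s, a - 1] (fun _ => b) (fun _ => c)
      = J ![q, r, s, a] (fun _ => b) (fun _ => c) - J ![q, r, s, 1] (fun _ => b) (fun _ => c) := by
    intro q r s
    refine J_sub _ _ fun x x' y y' => ?_
    simp
    ring
  have e : (fun _ => a - 1 : Fin 4 → G → G → ℝ) = ![a - 1, a - 1, a - 1, a - 1] := by
    funext i; fin_cases i <;> rfl
  rw [e]
  simp only [s0, s1, s2, s3]
  have o : ∀ p : G → G → ℝ, p = 1 → (p = 1 ∨ p = a) := fun _ h => Or.inl h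
  have k := fun p q r s hp hq hr hs => abs_le.1 (key p q r s hp hq hr hs)
  have l1 : (1 : G → G → ℝ) = 1 ∨ (1 : G → G → ℝ) = a := Or.inl rfl
  have l2 : a = 1 ∨ a = a := Or.inr rfl
  rw [abs_le]
  constructor <;> linarith [k a a a a l2 l2 l2 l2, k 1 a a a l1 l2 l2 l2, k a 1 a a l2 l1 l2 l2,
    k a a 1 a l2 l2 l1 l2, k a a a 1 l2 l2 l2 l1, k 1 1 a a l1 l1 l2 l2, k 1 a 1 a l1 l2 l1 l2,
    k 1 a a 1 l1 l2 l2 l1, k a 1 1 a l2 l1 l1 l2, k a 1 a 1 l2 l1 l2 l1, k a a 1 1 l2 l2 l1 l1,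
    k 1 1 1 a l1 l1 l1 l2, k 1 1 a 1 l1 l1 l2 l1, k 1 a 1 1 l1 l2 l1 l1, k a 1 1 1 l2 l1 l1 l1,
    k 1 1 1 1 l1 l1 l1 l1]

end

/-! ### Consequences of the linear forms condition -/

section

variable {G : Type*} [Fintype G]
variable [Nonempty G]

lemma LF.edge {γ : ℝ} {a b c : G → G → ℝ} (h : LF γ a b c) : 𝔼 x, 𝔼 y, a x y ≤ 1 + γ := by
  have := (abs_le.1 (h ![a, 1, 1, 1] 1 1 (by intro i; fin_cases i <;> simp)
    (fun _ => Or.inl rfl) (fun _ => Or.inl rfl))).2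
  simp [J] at this
  linarith

lemma LF.star {γ : ℝ} {a b c : G → G → ℝ} (h : LF γ a b c) :
    𝔼 x, 𝔼 z, 𝔼 z', c z x * c z' x ≤ 1 + γ := by
  have := (abs_le.1 (h 1 1 ![c, c, 1, 1] (fun _ => Or.inl rfl)
    (fun _ => Or.inl rfl) (by intro i; fin_cases i <;> simp))).2
  simp [J] at this
  linarith

lemma LF.box {γ : ℝ} {a b c : G → G → ℝ} (h : LF γ a b c) :
    𝔼 y, 𝔼 y', 𝔼 z, 𝔼 z', b y z * b y' z * b y z' * b y' z' ≤ 1 + γ := by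
  have := (abs_le.1 (h 1 (fun _ => b) 1 (fun _ => Or.inl rfl)
    (fun _ => Or.inr rfl) (fun _ => Or.inl rfl))).2
  simp [J] at this
  linarith

lemma LF.cherry {γ : ℝ} {a b c : G → G → ℝ} (h : LF γ a b c) :
    |(𝔼 x, 𝔼 y, 𝔼 z, b y z * c z x) - 1| ≤ γ := by
  have := h 1 ![b, 1, 1, 1] ![c, 1, 1, 1] (fun _ => Or.inl rfl)
    (by intro i; fin_cases i <;> simp) (by intro i; fin_cases i <;> simp)
  simpa [J] using this

lemma LF.cherry2 {γ : ℝ} {a b c : G → G → ℝ} (h : LF γ a b c) :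
    |(𝔼 x, 𝔼 y, (𝔼 z, b y z * c z x) ^ 2) - 1| ≤ γ := by
  have := h 1 ![b, 1, b, 1] ![c, c, 1, 1] (fun _ => Or.inl rfl)
    (by intro i; fin_cases i <;> simp) (by intro i; fin_cases i <;> simp)
  simp [J] at this
  convert this using 6
  rw [sq, expect_mul_expect]
  refine expect_congr rfl fun x _ => expect_congr rfl fun x' _ => ?_
  ring

/-- Replacing the weight `a` by `1` hardly changes averages against products of functions majorised
by `b` and `c`: two applications of Cauchy–Schwarz eliminate first `P, P'` and then `Q, Q'`, and
leave the average estimated in `LF.J_sub_one`. -/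
lemma LF.decouple {κ : ℝ} {a b c : G → G → ℝ} (hκ : 0 ≤ κ) (hκ1 : κ ≤ 1) (h : LF (κ ^ 4) a b c)
    (P P' Q Q' : G → G → ℝ) (hP : ∀ z x, |P z x| ≤ c z x) (hP' : ∀ z x, |P' z x| ≤ c z x)
    (hQ : ∀ y z, |Q y z| ≤ b y z) (hQ' : ∀ y z, |Q' y z| ≤ b y z) :
    |𝔼 x, 𝔼 y, 𝔼 z, 𝔼 z', (a x y - 1) * (Q y z * P z x * (Q' y z' * P' z' x))| ≤ 4 * κ := by
  have hb : ∀ y z, 0 ≤ b y z := fun y z => (abs_nonneg _).trans (hQ y z)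
  have hc : ∀ y z, 0 ≤ c y z := fun y z => (abs_nonneg _).trans (hP y z)
  set S := 𝔼 x, 𝔼 y, 𝔼 z, 𝔼 z', (a x y - 1) * (Q y z * P z x * (Q' y z' * P' z' x)) with hS
  set M := 𝔼 y, 𝔼 y', 𝔼 z, 𝔼 z', (Q y z * Q y' z * Q' y z' * Q' y' z') *
    𝔼 x, c z x * c z' x * ((a x y - 1) * (a x y' - 1)) with hM
  have hκ4 : κ ^ 4 ≤ 1 := pow_le_one₀ hκ hκ1
  have hκ40 : 0 ≤ κ ^ 4 := by positivity
  have e1 : S = 𝔼 x, 𝔼 z, 𝔼 z', (P z x * P' z' x) * 𝔼 y, (a x y - 1) * (Q y z * Q' y z') := by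
    rw [hS]
    refine expect_congr rfl fun x _ => ?_
    rw [rot3]
    refine expect_congr rfl fun z _ => expect_congr rfl fun z' _ => ?_
    rw [mul_expect]
    refine expect_congr rfl fun y _ => ?_
    ring
  have e2 : 𝔼 x, 𝔼 z, 𝔼 z', (c z x * c z' x) * (𝔼 y, (a x y - 1) * (Q y z * Q' y z')) ^ 2 = M := by
    have : ∀ x z z', (c z x * c z' x) * (𝔼 y, (a x y - 1) * (Q y z * Q' y z')) ^ 2
      = 𝔼 y, 𝔼 y', (Q y z * Q y' z * Q' y z' * Q' y' z') *
        (c z x * c z' x * ((a x y - 1) * (a x y' - 1))) := by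
      intro x z z'
      rw [sq, expect_mul_expect, mul_expect]
      refine expect_congr rfl fun y _ => ?_
      rw [mul_expect]
      refine expect_congr rfl fun y' _ => ?_
      ring
    simp only [this]
    simp only [hM, mul_expect]
    refine Eq.trans (expect_congr rfl fun x _ => ?_) (rot5 _)
    rw [rot4, rot4]
  have e3 : 𝔼 y, 𝔼 y', 𝔼 z, 𝔼 z', (b y z * b y' z * b y z' * b y' z') *
      (𝔼 x, c z x * c z' x * ((a x y - 1) * (a x y' - 1))) ^ 2
      = J (fun _ => a - 1) (fun _ => b) (fun _ => c) := by
    unfold J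
    rw [rot6, rot6]
    refine expect_congr rfl fun y _ => expect_congr rfl fun y' _ => expect_congr rfl fun z _ =>
      expect_congr rfl fun z' _ => ?_
    rw [sq, expect_mul_expect, mul_expect]
    refine expect_congr rfl fun x _ => ?_
    rw [mul_expect]
    refine expect_congr rfl fun x' _ => ?_
    simp
    ring
  have h1 : S ^ 2 ≤ (1 + κ ^ 4) * |M| := by
    rw [e1]
    refine (wcs3 _ (fun x z z' => c z x * c z' x) _ fun x z z' => ?_).trans ?_
    · rw [abs_mul]
      exact mul_le_mul (hP _ _) (hP' _ _) (abs_nonneg _) (hc _ _)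
    · rw [e2]
      refine (mul_le_mul_of_nonneg_left (le_abs_self M) ?_).trans
        (mul_le_mul_of_nonneg_right h.star (abs_nonneg M))
      exact expect_nonneg fun x _ => expect_nonneg fun y _ => expect_nonneg fun z _ =>
        mul_nonneg (hc _ _) (hc _ _)
  have h2 : M ^ 2 ≤ (1 + κ ^ 4) * (16 * κ ^ 4) := by
    rw [hM]
    refine (wcs4 _ (fun y y' z z' => b y z * b y' z * b y z' * b y' z') _
      fun y y' z z' => ?_).trans ?_
    · rw [abs_mul, abs_mul, abs_mul]
      have := hb y z
      have := hb y' z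
      have := hb y z'
      have := hb y' z'
      gcongr <;> apply_assumption
    · rw [e3]
      refine mul_le_mul h.box ((le_abs_self _).trans h.J_sub_one) ?_ (by linarith)
      rw [← e3]
      exact expect_nonneg fun x _ => expect_nonneg fun y _ => expect_nonneg fun z _ =>
        expect_nonneg fun t _ => mul_nonneg
          (mul_nonneg (mul_nonneg (mul_nonneg (hb _ _) (hb _ _)) (hb _ _)) (hb _ _)) (sq_nonneg _)
  have h3 : |M| ≤ 8 * κ ^ 2 := by
    apply abs_le_of_sq_le_sq _ (by positivity)
    nlinarith
  have h4 : S ^ 2 ≤ (4 * κ) ^ 2 := by nlinarith [abs_nonneg M]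
  exact abs_le_of_sq_le_sq h4 (by positivity)

end

/-! ### Relative triangle counting -/

section

variable {G : Type*} [Fintype G]

/-- The weighted triangle density of three edge functions, with cyclic arguments. -/
noncomputable def tri (a b c : G → G → ℝ) : ℝ := 𝔼 x, 𝔼 y, 𝔼 z, a x y * (b y z * c z x)

lemma tri_rot (a b c : G → G → ℝ) : tri a b c = tri b c a := by
  unfold tri
  rw [rot3]
  refine expect_congr rfl fun x _ => expect_congr rfl fun y _ => expect_congr rfl fun z _ => ?_
  ring

lemma tri_sub (a a' b c : G → G → ℝ) :
    tri (fun x y => a x y - a' x y) b c = tri a b c - tri a' b c := by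
  unfold tri
  simp only [← expect_sub_distrib]
  refine expect_congr rfl fun x _ => expect_congr rfl fun y _ => expect_congr rfl fun z _ => ?_
  ring

/-- `h` has cut norm at most `ε`, tested on `[0, 1]`-valued functions of the two variables. -/
def CutLe (h : G → G → ℝ) (ε : ℝ) : Prop :=
  ∀ u v : G → ℝ, (∀ x, 0 ≤ u x ∧ u x ≤ 1) → (∀ y, 0 ≤ v y ∧ v y ≤ 1) →
    |𝔼 x, 𝔼 y, h x y * (u x * v y)| ≤ ε

/-- `g` is a dense model of `F`: both are nonnegative and majorised by the weight `ω`, in addition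
`g ≤ 1`, and `F - g` has cut norm at most `ε`. -/
def Model (ε : ℝ) (ω F g : G → G → ℝ) : Prop :=
  (∀ x y, 0 ≤ F x y ∧ F x y ≤ ω x y ∧ 0 ≤ g x y ∧ g x y ≤ ω x y ∧ g x y ≤ 1) ∧
    CutLe (fun x y => F x y - g x y) ε

/-- Passing to dense models at cut distance `ε` changes triangle densities by at most `θ`, for
functions majorised by `a`, `b`, `c`. -/
def Counts (ε θ : ℝ) (a b c : G → G → ℝ) : Prop :=
  ∀ F₁ F₂ F₃ g₁ g₂ g₃, Model ε a F₁ g₁ → Model ε b F₂ g₂ → Model ε c F₃ g₃ →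
    |tri F₁ F₂ F₃ - tri g₁ g₂ g₃| ≤ θ

lemma Counts.rot {ε θ : ℝ} {a b c : G → G → ℝ} (h : Counts ε θ a b c) : Counts ε θ b c a := by
  intro F₂ F₃ F₁ g₂ g₃ g₁ h₂ h₃ h₁
  rw [← tri_rot F₁, ← tri_rot g₁]
  exact h _ _ _ _ _ _ h₁ h₂ h₃

lemma model_self {ε : ℝ} (hε : 0 ≤ ε) (h : G → G → ℝ) (hh : ∀ x y, 0 ≤ h x y ∧ h x y ≤ 1) :
    Model ε 1 h h := by
  refine ⟨fun x y => ⟨(hh x y).1, (hh x y).2, (hh x y).1, (hh x y).2, (hh x y).2⟩, ?_⟩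
  intro u v _ _
  simpa using hε

/-- If `|D| ≤ ρ` then `D²` is `D` times its truncation to `[-1, 1]`, up to an error depending only on
`ρ - 1`. The truncation is split into its positive and negative part, so that it can be tested
against in `Counts`. -/
lemma clamp_sq (D ρ : ℝ) (h : |D| ≤ ρ) :
    D ^ 2 ≤ max 0 (min 1 D) * D - max 0 (min 1 (-D)) * D + ((ρ - 1) ^ 2 + |ρ - 1|) := by
  have h1 := abs_le.1 h
  have h2 := le_abs_self (ρ - 1)
  have h3 := abs_nonneg (ρ - 1)
  rcases le_total 0 D with hD | hD
  · rw [max_eq_left (a := (0:ℝ)) (b := min 1 (-D)) ((min_le_right _ _).trans (by linarith))]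
    rcases le_total 1 D with h4 | h4
    · rw [min_eq_left h4, max_eq_right zero_le_one]
      nlinarith
    · rw [min_eq_right h4, max_eq_right hD]
      nlinarith
  · rw [max_eq_left (a := (0:ℝ)) (b := min 1 D) ((min_le_right _ _).trans (by linarith))]
    rcases le_total 1 (-D) with h4 | h4
    · rw [min_eq_left h4, max_eq_right zero_le_one]
      nlinarith
    · rw [min_eq_right h4, max_eq_right (by linarith)]
      nlinarith

variable [Nonempty G]

lemma CutLe.tri_le {h b c : G → G → ℝ} {ε : ℝ} (H : CutLe h ε)
    (hb : ∀ x y, 0 ≤ b x y ∧ b x y ≤ 1) (hc : ∀ x y, 0 ≤ c x y ∧ c x y ≤ 1) :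
    |tri h b c| ≤ ε := by
  unfold tri
  rw [← rot3 fun z x y => h x y * (b y z * c z x)]
  refine (abs_expect_le _ _).trans (expect_le univ_nonempty fun z _ => ?_)
  have := H (fun x => c z x) (fun y => b y z) (fun x => hc _ _) (fun y => hb _ _)
  simpa only [fun x y => mul_comm (c z x) (b y z)] using this

/-- The counting lemma for bounded functions. -/
lemma counts_one (ε : ℝ) : Counts ε (3 * ε) (1 : G → G → ℝ) 1 1 := by
  intro F₁ F₂ F₃ g₁ g₂ g₃ h₁ h₂ h₃
  have e₁ := h₁.2.tri_le (b := F₂) (c := F₃) (fun x y => ⟨(h₂.1 x y).1, (h₂.1 x y).2.1⟩)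
    (fun x y => ⟨(h₃.1 x y).1, (h₃.1 x y).2.1⟩)
  have e₂ := h₂.2.tri_le (b := F₃) (c := g₁) (fun x y => ⟨(h₃.1 x y).1, (h₃.1 x y).2.1⟩)
    (fun x y => ⟨(h₁.1 x y).2.2.1, (h₁.1 x y).2.2.2.2⟩)
  have e₃ := h₃.2.tri_le (b := g₁) (c := g₂) (fun x y => ⟨(h₁.1 x y).2.2.1, (h₁.1 x y).2.2.2.2⟩)
    (fun x y => ⟨(h₂.1 x y).2.2.1, (h₂.1 x y).2.2.2.2⟩)
  rw [tri_sub] at e₁ e₂ e₃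
  rw [← tri_rot g₁, ← tri_rot g₁] at e₂
  rw [tri_rot, tri_rot g₃] at e₃
  rw [abs_le] at *
  constructor <;> linarith

lemma LF.sub_one_sq {κ : ℝ} {a b c : G → G → ℝ} (h : LF (κ ^ 4) a b c) :
    𝔼 x, 𝔼 y, ((𝔼 z, b y z * c z x) - 1) ^ 2 ≤ 3 * κ ^ 4 := by
  have h1 := abs_le.1 h.cherry
  have h2 := abs_le.1 h.cherry2
  have : 𝔼 x, 𝔼 y, ((𝔼 z, b y z * c z x) - 1) ^ 2 =
      (𝔼 x, 𝔼 y, (𝔼 z, b y z * c z x) ^ 2) - 2 * (𝔼 x, 𝔼 y, 𝔼 z, b y z * c z x) + 1 := by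
    have e : ∀ x y, ((𝔼 z, b y z * c z x) - 1) ^ 2
      = (𝔼 z, b y z * c z x) ^ 2 - 2 * (𝔼 z, b y z * c z x) + 1 := fun x y => by ring
    simp only [e, expect_add_distrib, expect_sub_distrib, ← mul_expect, Fintype.expect_const]
  linarith

lemma LF.sub_one_abs {κ : ℝ} {a b c : G → G → ℝ} (h : LF (κ ^ 4) a b c) :
    𝔼 x, 𝔼 y, |(𝔼 z, b y z * c z x) - 1| ≤ 2 * κ ^ 2 := by
  have h1 := wcs2 (fun _ _ : G => (1 : ℝ)) (fun _ _ => 1)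
    (fun x y => |(𝔼 z, b y z * c z x) - 1|) (fun _ _ => by simp)
  simp only [one_mul, sq_abs, Fintype.expect_const] at h1
  refine le_of_sq_le_sq ?_ (by positivity)
  have := h.sub_one_sq
  nlinarith [sq_nonneg (κ ^ 2)]

/-- Densification: if counting holds with the weight `1` in the first place, then it holds with the
weight `a` there. -/
lemma Counts.step {ε κ s : ℝ} {a b c : G → G → ℝ} (H : Counts ε (s ^ 2) 1 b c)
    (hκ : 0 ≤ κ) (hε : 0 ≤ ε) (hs : 0 ≤ s) (hs1 : s ≤ 1) (hκs : κ ≤ s ^ 2) (hεs : ε ≤ s ^ 2)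
    (h : LF (κ ^ 4) a b c) : Counts ε (8 * s) a b c := by
  intro F₁ F₂ F₃ g₁ g₂ g₃ h₁ h₂ h₃
  have hκ1 : κ ≤ 1 := hκs.trans (pow_le_one₀ hs hs1)
  have ha : ∀ x y, 0 ≤ a x y := fun x y => (h₁.1 x y).1.trans (h₁.1 x y).2.1
  have hb : ∀ x y, 0 ≤ b x y := fun x y => (h₂.1 x y).1.trans (h₂.1 x y).2.1
  have hc : ∀ x y, 0 ≤ c x y := fun x y => (h₃.1 x y).1.trans (h₃.1 x y).2.1
  set D : G → G → ℝ := fun x y => 𝔼 z, (F₂ y z * F₃ z x - g₂ y z * g₃ z x) with hD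
  have hDe : ∀ w : G → G → ℝ, 𝔼 x, 𝔼 y, w x y * D x y = tri w F₂ F₃ - tri w g₂ g₃ := by
    intro w
    simp only [hD, tri, mul_expect, ← expect_sub_distrib, mul_sub]
  have hDρ : ∀ x y, |D x y| ≤ 𝔼 z, b y z * c z x := by
    intro x y
    refine (abs_expect_le _ _).trans (expect_le_expect fun z _ => ?_)
    have i1 : F₂ y z * F₃ z x ≤ b y z * c z x :=
      mul_le_mul (h₂.1 _ _).2.1 (h₃.1 _ _).2.1 (h₃.1 _ _).1 (hb _ _)
    have i2 : g₂ y z * g₃ z x ≤ b y z * c z x :=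
      mul_le_mul (h₂.1 _ _).2.2.2.1 (h₃.1 _ _).2.2.2.1 (h₃.1 _ _).2.2.1 (hb _ _)
    have i3 : 0 ≤ F₂ y z * F₃ z x := mul_nonneg (h₂.1 _ _).1 (h₃.1 _ _).1
    have i4 : 0 ≤ g₂ y z * g₃ z x := mul_nonneg (h₂.1 _ _).2.2.1 (h₃.1 _ _).2.2.1
    rw [abs_le]
    constructor <;> linarith
  -- the unweighted second moment of `D`
  have hD2 : 𝔼 x, 𝔼 y, D x y ^ 2 ≤ 2 * s ^ 2 + 5 * κ := by
    have k1 := abs_le.1 (H _ F₂ F₃ _ g₂ g₃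
      (model_self hε (fun x y => max 0 (min 1 (D x y)))
        (fun x y => ⟨le_max_left _ _, max_le zero_le_one (min_le_left _ _)⟩)) h₂ h₃)
    have k2 := abs_le.1 (H _ F₂ F₃ _ g₂ g₃
      (model_self hε (fun x y => max 0 (min 1 (-D x y)))
        (fun x y => ⟨le_max_left _ _, max_le zero_le_one (min_le_left _ _)⟩)) h₂ h₃)
    rw [← hDe] at k1 k2
    have k3 : 𝔼 x, 𝔼 y, D x y ^ 2 ≤ 𝔼 x, 𝔼 y, (max 0 (min 1 (D x y)) * D x y
        - max 0 (min 1 (-D x y)) * D x y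
        + (((𝔼 z, b y z * c z x) - 1) ^ 2 + |(𝔼 z, b y z * c z x) - 1|)) :=
      expect_le_expect fun x _ => expect_le_expect fun y _ => clamp_sq _ _ (hDρ x y)
    simp only [expect_add_distrib, expect_sub_distrib] at k3
    have k4 := h.sub_one_sq
    have k5 := h.sub_one_abs
    have k6 : κ ^ 4 ≤ κ := pow_le_of_le_one hκ hκ1 (by norm_num)
    have k7 : κ ^ 2 ≤ κ := pow_le_of_le_one hκ hκ1 (by norm_num)
    linarith
  have hDa : 𝔼 x, 𝔼 y, (a x y - 1) * D x y ^ 2 ≤ 16 * κ := by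
    have b2 : ∀ y z, |F₂ y z| ≤ b y z := fun y z => by
      rw [abs_of_nonneg (h₂.1 _ _).1]; exact (h₂.1 _ _).2.1
    have b3 : ∀ y z, |F₃ y z| ≤ c y z := fun y z => by
      rw [abs_of_nonneg (h₃.1 _ _).1]; exact (h₃.1 _ _).2.1
    have c2 : ∀ y z, |g₂ y z| ≤ b y z := fun y z => by
      rw [abs_of_nonneg (h₂.1 _ _).2.2.1]; exact (h₂.1 _ _).2.2.2.1
    have c3 : ∀ y z, |g₃ y z| ≤ c y z := fun y z => by
      rw [abs_of_nonneg (h₃.1 _ _).2.2.1]; exact (h₃.1 _ _).2.2.2.1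
    have l1 := abs_le.1 (h.decouple hκ hκ1 F₃ F₃ F₂ F₂ b3 b3 b2 b2)
    have l2 := abs_le.1 (h.decouple hκ hκ1 F₃ g₃ F₂ g₂ b3 c3 b2 c2)
    have l3 := abs_le.1 (h.decouple hκ hκ1 g₃ F₃ g₂ F₂ c3 b3 c2 b2)
    have l4 := abs_le.1 (h.decouple hκ hκ1 g₃ g₃ g₂ g₂ c3 c3 c2 c2)
    have e : 𝔼 x, 𝔼 y, (a x y - 1) * D x y ^ 2 = 𝔼 x, 𝔼 y, 𝔼 z, 𝔼 z',
        ((a x y - 1) * (F₂ y z * F₃ z x * (F₂ y z' * F₃ z' x))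
        - (a x y - 1) * (F₂ y z * F₃ z x * (g₂ y z' * g₃ z' x))
        - (a x y - 1) * (g₂ y z * g₃ z x * (F₂ y z' * F₃ z' x))
        + (a x y - 1) * (g₂ y z * g₃ z x * (g₂ y z' * g₃ z' x))) := by
      refine expect_congr rfl fun x _ => expect_congr rfl fun y _ => ?_
      rw [sq, expect_mul_expect, mul_expect]
      refine expect_congr rfl fun z _ => ?_
      rw [mul_expect]
      refine expect_congr rfl fun z' _ => ?_
      ring
    rw [e]
    simp only [expect_add_distrib, expect_sub_distrib]
    linarith
  have hF : (𝔼 x, 𝔼 y, F₁ x y * D x y) ^ 2 ≤ (7 * s) ^ 2 := by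
    refine (wcs2 F₁ a D fun x y => ?_).trans ?_
    · rw [abs_of_nonneg (h₁.1 _ _).1]; exact (h₁.1 _ _).2.1
    have m1 : 𝔼 x, 𝔼 y, a x y * D x y ^ 2
        = 𝔼 x, 𝔼 y, (a x y - 1) * D x y ^ 2 + 𝔼 x, 𝔼 y, D x y ^ 2 := by
      simp only [← expect_add_distrib]
      refine expect_congr rfl fun x _ => expect_congr rfl fun y _ => ?_
      ring
    have m2 : 𝔼 x, 𝔼 y, a x y ≤ 2 := by
      have : κ ^ 4 ≤ 1 := pow_le_one₀ hκ hκ1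
      linarith [h.edge]
    have m3 : 0 ≤ 𝔼 x, 𝔼 y, a x y * D x y ^ 2 := expect_nonneg fun x _ => expect_nonneg fun y _ =>
      mul_nonneg (ha _ _) (sq_nonneg _)
    have m4 : 𝔼 x, 𝔼 y, a x y * D x y ^ 2 ≤ 23 * s ^ 2 := by linarith
    refine (mul_le_mul m2 m4 m3 (by norm_num)).trans ?_
    nlinarith [sq_nonneg s]
  have hF' := abs_le.1 (abs_le_of_sq_le_sq hF (by positivity))
  rw [hDe] at hF'
  have hg := h₁.2.tri_le (fun x y => ⟨(h₂.1 x y).2.2.1, (h₂.1 x y).2.2.2.2⟩)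
    (fun x y => ⟨(h₃.1 x y).2.2.1, (h₃.1 x y).2.2.2.2⟩)
  rw [tri_sub, abs_le] at hg
  have : s ^ 2 ≤ s := pow_le_of_le_one hs hs1 (by norm_num)
  rw [abs_le]
  constructor <;> linarith

end

/-- The relative counting lemma: starting from bounded functions, the three sparse weights are
introduced one at a time by `Counts.step`. -/
theorem relative_counting (t : ℝ) (ht : 0 < t) (ht1 : t ≤ 1) :
    ∃ ε : ℝ, 0 < ε ∧ ε ≤ 1 ∧ ∀ (G : Type) [Fintype G] [Nonempty G] (a b c : G → G → ℝ),
      LF (ε ^ 4) a b c → Counts ε t a b c := by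
  set s₃ := t / 8 with h3
  set s₂ := s₃ ^ 2 / 8 with h2
  set s₁ := s₂ ^ 2 / 8 with h1
  have p3 : 0 < s₃ := by positivity
  have p2 : 0 < s₂ := by positivity
  have p1 : 0 < s₁ := by positivity
  have q3 : s₃ ≤ 1 := by linarith
  have q23 : s₂ ≤ s₃ := by nlinarith
  have q12 : s₁ ≤ s₂ := by nlinarith
  have r23 : s₂ ^ 2 ≤ s₃ ^ 2 := by gcongr
  have r12 : s₁ ^ 2 ≤ s₂ ^ 2 := by gcongr
  have hs : s₁ ^ 2 ≤ 1 := pow_le_one₀ p1.le (by linarith)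
  refine ⟨s₁ ^ 2 / 3, by positivity, by linarith, fun G _ _ a b c h => ?_⟩
  have hε : 0 ≤ s₁ ^ 2 / 3 := by positivity
  have k0 : Counts (s₁ ^ 2 / 3) (s₁ ^ 2) (1 : G → G → ℝ) 1 1 := by
    have := counts_one (G := G) (s₁ ^ 2 / 3)
    convert this using 1
    ring
  have hb : LF ((s₁ ^ 2 / 3) ^ 4) b 1 1 := (h.one.rot.rot.one).rot.rot
  have hc : LF ((s₁ ^ 2 / 3) ^ 4) c 1 b := (h.one.rot.rot)
  have k1 := k0.step (a := b) hε hε p1.le (by linarith) (by linarith) (by linarith) hb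
  rw [show 8 * s₁ = s₂ ^ 2 by rw [h1]; ring] at k1
  have k2 := (k1.rot).step (a := c) hε hε p2.le (by linarith) (by linarith) (by linarith) hc
  rw [show 8 * s₂ = s₃ ^ 2 by rw [h2]; ring] at k2
  have k3 := k2.rot.step (a := a) hε hε p3.le (by linarith) (by linarith) (by linarith) h
  rwa [show 8 * s₃ = t by rw [h3]; ring] at k3

/-! ### Averaging over the boxes of a partition -/

section

variable {G : Type*} [Fintype G]

lemma expect_le_max_boole (k u : G → ℝ) (hu : ∀ x, 0 ≤ u x ∧ u x ≤ 1) :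
    𝔼 x, k x * u x ≤ 𝔼 x, k x * (if 0 < k x then 1 else 0) := by
  refine expect_le_expect fun x _ => ?_
  have := hu x
  split_ifs with h
  · nlinarith
  · nlinarith

lemma cut_le_of_boole {h : G → G → ℝ} {ε : ℝ}
    (H : ∀ u v : G → ℝ, (∀ x, u x = 0 ∨ u x = 1) → (∀ x, v x = 0 ∨ v x = 1) →
      𝔼 x, 𝔼 y, h x y * (u x * v y) ≤ ε)
    (u v : G → ℝ) (hu : ∀ x, 0 ≤ u x ∧ u x ≤ 1) (hv : ∀ x, 0 ≤ v x ∧ v x ≤ 1) :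
    𝔼 x, 𝔼 y, h x y * (u x * v y) ≤ ε := by
  have e1 : ∀ u v : G → ℝ, 𝔼 x, 𝔼 y, h x y * (u x * v y) = 𝔼 x, (𝔼 y, h x y * v y) * u x := by
    intro u v
    refine expect_congr rfl fun x _ => ?_
    rw [expect_mul]
    refine expect_congr rfl fun y _ => ?_
    ring
  have e2 : ∀ u v : G → ℝ, 𝔼 x, 𝔼 y, h x y * (u x * v y) = 𝔼 y, (𝔼 x, h x y * u x) * v y := by
    intro u v
    rw [expect_comm]
    refine expect_congr rfl fun x _ => ?_
    rw [expect_mul]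
    refine expect_congr rfl fun y _ => ?_
    ring
  rw [e1]
  refine (expect_le_max_boole _ u hu).trans ?_
  rw [← e1 (fun x => if 0 < 𝔼 y, h x y * v y then 1 else 0) v, e2]
  refine (expect_le_max_boole _ v hv).trans ?_
  rw [← e2 (fun x => if 0 < 𝔼 y, h x y * v y then 1 else 0)]
  refine H _ _ (fun x => ?_) (fun x => ?_)
  · split_ifs <;> simp
  · split_ifs <;> simp

/-- Because the tested expression is bilinear, a large cut norm is witnessed by indicator functions. -/
lemma exists_boole_of_not_cutLe {h : G → G → ℝ} {ε : ℝ} (H : ¬ CutLe h ε) :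
    ∃ u v : G → ℝ, (∀ x, u x = 0 ∨ u x = 1) ∧ (∀ x, v x = 0 ∨ v x = 1) ∧
      ε < |𝔼 x, 𝔼 y, h x y * (u x * v y)| := by
  by_contra! H'
  refine H fun u v hu hv => abs_le.2 ⟨?_, ?_⟩
  · have := cut_le_of_boole (h := fun x y => - h x y) (ε := ε) (fun u v hu hv => ?_) u v hu hv
    · simp only [neg_mul, expect_neg_distrib] at this
      linarith
    · simp only [neg_mul, expect_neg_distrib]
      linarith [(abs_le.1 (H' u v hu hv)).1]
  · exact cut_le_of_boole (fun u v hu hv => (abs_le.1 (H' u v hu hv)).2) u v hu hv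

/-- The cell of `v` in the partition of `G` into the fibres of `c`. -/
def cls (c : G → ℕ) (v : G) : Finset G := univ.filter fun w => c w = c v

lemma mem_cls {c : G → ℕ} {v w : G} : w ∈ cls c v ↔ c w = c v := by simp [cls]

lemma cls_nonempty (c : G → ℕ) (v : G) : (cls c v).Nonempty := ⟨v, mem_cls.2 rfl⟩

lemma cls_congr {c : G → ℕ} {v w : G} (h : c v = c w) : cls c v = cls c w := by
  simp [cls, h]

open Classical in
/-- The indicator function of the vertices whose cell has relative size at least `τ`. -/
noncomputable def good (c : G → ℕ) (τ : ℝ) (v : G) : ℝ :=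
  if τ * Fintype.card G ≤ (cls c v).card then 1 else 0

lemma good_congr {c : G → ℕ} {τ : ℝ} {v w : G} (h : c v = c w) : good c τ v = good c τ w := by
  simp [good, cls_congr h]

lemma good_bounds (c : G → ℕ) (τ : ℝ) (v : G) : 0 ≤ good c τ v ∧ good c τ v ≤ 1 := by
  unfold good; split_ifs <;> norm_num

lemma good_sq (c : G → ℕ) (τ : ℝ) (v : G) : good c τ v * good c τ v = good c τ v := by
  unfold good; split_ifs <;> norm_num

/-- The conditional expectation of `F` on pairs of cells, set to `0` where one of the two cells has
relative size less than `τ`. -/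
noncomputable def box (F : G → G → ℝ) (c : G → ℕ) (τ : ℝ) (u v : G) : ℝ :=
  good c τ u * good c τ v * 𝔼 u₁ ∈ cls c u, 𝔼 v₁ ∈ cls c v, F u₁ v₁

/-- `φ` is constant on pairs of cells of `c`. -/
def Inv (c : G → ℕ) (φ : G → G → ℝ) : Prop :=
  ∀ u u' v v', c u = c u' → c v = c v' → φ u v = φ u' v'

lemma box_inv (F : G → G → ℝ) (c : G → ℕ) (τ : ℝ) : Inv c (box F c τ) := by
  intro u u' v v' hu hv
  simp only [box, cls_congr hu, cls_congr hv, good_congr hu, good_congr hv]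

/-- Averaging over cells does not change the average against a function constant on cells. -/
lemma proj1 (c : G → ℕ) (k m : G → ℝ) (hm : ∀ u u', c u = c u' → m u = m u') :
    𝔼 u, (𝔼 u' ∈ cls c u, k u') * m u = 𝔼 u, k u * m u := by
  rw [Fintype.expect_eq_sum_div_card, Fintype.expect_eq_sum_div_card]
  congr 1
  have : ∀ u, (𝔼 u' ∈ cls c u, k u') * m u
      = ∑ u', if c u' = c u then k u' * m u' / (cls c u').card else 0 := by
    intro u
    rw [expect_eq_sum_div_card, cls, sum_filter, div_mul_eq_mul_div, sum_mul, sum_div]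
    refine sum_congr rfl fun u' _ => ?_
    split_ifs with h
    · rw [hm u u' h.symm]
      rw [cls_congr h, cls]
    · simp
  simp only [this]
  rw [sum_comm]
  refine sum_congr rfl fun u' _ => ?_
  have e : (univ.filter fun u => c u' = c u) = cls c u' := by
    ext u
    simp [cls, eq_comm]
  rw [← sum_filter, e, sum_const, nsmul_eq_mul]
  have : ((cls c u').card : ℝ) ≠ 0 := by
    exact_mod_cast (card_pos.2 (cls_nonempty c u')).ne'
  field_simp

/-- Averaging over pairs of cells is a self-adjoint operation, up to the removal of small cells. -/
lemma proj2 (F φ : G → G → ℝ) (c : G → ℕ) (τ : ℝ) (hφ : Inv c φ) :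
    𝔼 u, 𝔼 v, box F c τ u v * φ u v = 𝔼 u, 𝔼 v, F u v * (good c τ u * good c τ v * φ u v) := by
  have h1 : ∀ v, 𝔼 u, box F c τ u v * φ u v
      = 𝔼 u, (𝔼 v' ∈ cls c v, F u v') * (good c τ u * good c τ v * φ u v) := by
    intro v
    rw [← proj1 c (fun u => 𝔼 v' ∈ cls c v, F u v')]
    · refine expect_congr rfl fun u _ => ?_
      rw [box]
      ring
    · intro u u' h
      rw [good_congr h, hφ u u' v v h rfl]
  have h2 : ∀ u, 𝔼 v, (𝔼 v' ∈ cls c v, F u v') * (good c τ u * good c τ v * φ u v)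
      = 𝔼 v, F u v * (good c τ u * good c τ v * φ u v) := by
    intro u
    rw [← proj1 c (fun v => F u v)]
    intro v v' h
    rw [good_congr h, hφ u u v v' rfl h]
  rw [expect_comm]
  simp only [h1]
  rw [expect_comm]
  simp only [h2]


/-- Energy increment: by Pythagoras, refining the partition `c` to `c'` increases the energy of the
box averages by their squared distance, up to an error from the small cells of `c'`. -/
lemma energy_le {F : G → G → ℝ} (hF : ∀ x y, 0 ≤ F x y) {c c' : G → ℕ} {τ β : ℝ}
    (hcc : ∀ u v, c' u = c' v → c u = c v)
    (hb : ∀ x y, 0 ≤ box F c τ x y ∧ box F c τ x y ≤ 2)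
    (ht : 𝔼 x, 𝔼 y, F x y * (1 - good c' τ x * good c' τ y) ≤ β) :
    (𝔼 x, 𝔼 y, box F c τ x y ^ 2) + (𝔼 x, 𝔼 y, (box F c' τ x y - box F c τ x y) ^ 2) - 4 * β
      ≤ 𝔼 x, 𝔼 y, box F c' τ x y ^ 2 := by
  have h1 := proj2 F (box F c τ) c' τ
    (fun u u' v v' hu hv => box_inv F c τ u u' v v' (hcc _ _ hu) (hcc _ _ hv))
  have h2 := proj2 F (box F c τ) c τ (box_inv F c τ)
  have h3 : ∀ x y, good c τ x * good c τ y * box F c τ x y = box F c τ x y := by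
    intro x y
    rw [box]
    calc _ = (good c τ x * good c τ x) * (good c τ y * good c τ y) *
          𝔼 u' ∈ cls c x, 𝔼 v' ∈ cls c y, F u' v' := by ring
      _ = _ := by rw [good_sq, good_sq]
  simp only [h3] at h2
  have h4 : 𝔼 x, 𝔼 y, F x y * box F c τ x y
      - 𝔼 x, 𝔼 y, F x y * (good c' τ x * good c' τ y * box F c τ x y) ≤ 2 * β := by
    simp only [← expect_sub_distrib]
    refine le_trans ?_ (mul_le_mul_of_nonneg_left ht zero_le_two)
    simp only [mul_expect]
    refine expect_le_expect fun x _ => expect_le_expect fun y _ => ?_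
    have g1 := good_bounds c' τ x
    have g2 := good_bounds c' τ y
    have : 0 ≤ F x y * (1 - good c' τ x * good c' τ y) := mul_nonneg (hF _ _) (by nlinarith)
    nlinarith [hb x y]
  have h5 : 𝔼 x, 𝔼 y, (box F c' τ x y - box F c τ x y) ^ 2 = 𝔼 x, 𝔼 y, box F c' τ x y ^ 2
      - 2 * (𝔼 x, 𝔼 y, box F c' τ x y * box F c τ x y) + 𝔼 x, 𝔼 y, box F c τ x y * box F c τ x y := by
    simp only [mul_expect, ← expect_sub_distrib, ← expect_add_distrib]
    refine expect_congr rfl fun x _ => expect_congr rfl fun y _ => ?_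
    ring
  have h6 : 𝔼 x, 𝔼 y, box F c τ x y ^ 2 = 𝔼 x, 𝔼 y, box F c τ x y * box F c τ x y := by
    simp only [sq]
  linarith

lemma proj_close {F φ : G → G → ℝ} (hF : ∀ x y, 0 ≤ F x y) {c : G → ℕ} {τ β : ℝ}
    (ht : 𝔼 x, 𝔼 y, F x y * (1 - good c τ x * good c τ y) ≤ β) (hφ : Inv c φ)
    (hφ1 : ∀ x y, 0 ≤ φ x y ∧ φ x y ≤ 1) :
    |𝔼 x, 𝔼 y, F x y * φ x y - 𝔼 x, 𝔼 y, box F c τ x y * φ x y| ≤ β := by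
  rw [proj2 F φ c τ hφ]
  simp only [← expect_sub_distrib]
  have h : ∀ x y, 0 ≤ F x y * (1 - good c τ x * good c τ y) := fun x y => by
    have g1 := good_bounds c τ x
    have g2 := good_bounds c τ y
    exact mul_nonneg (hF _ _) (by nlinarith)
  have e : ∀ x y, F x y * φ x y - F x y * (good c τ x * good c τ y * φ x y)
      = F x y * (1 - good c τ x * good c τ y) * φ x y := fun x y => by ring
  simp only [e]
  rw [abs_of_nonneg (expect_nonneg fun x _ => expect_nonneg fun y _ =>
    mul_nonneg (h x y) (hφ1 x y).1)]
  refine le_trans (expect_le_expect fun x _ => expect_le_expect fun y _ => ?_) ht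
  exact mul_le_of_le_one_right (h x y) (hφ1 x y).2

variable [Nonempty G]

lemma expect_cls (c : G → ℕ) (v : G) (k : G → ℝ) : 𝔼 w ∈ cls c v, k w
    = (𝔼 w, k w * (if c w = c v then 1 else 0)) * (Fintype.card G / (cls c v).card) := by
  have h1 : ((cls c v).card : ℝ) ≠ 0 := by
    exact_mod_cast (card_pos.2 (cls_nonempty c v)).ne'
  have h2 : (Fintype.card G : ℝ) ≠ 0 := by exact_mod_cast Fintype.card_ne_zero
  rw [Fintype.expect_eq_sum_div_card, expect_eq_sum_div_card]
  simp only [mul_ite, mul_one, mul_zero]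
  rw [← sum_filter, ← cls]
  field_simp

lemma box_bounds {ν F : G → G → ℝ} {γ τ : ℝ} (hτ : 0 < τ) (hγ : γ ≤ τ ^ 2)
    (hν : CutLe (fun x y => ν x y - 1) γ) (hF : ∀ x y, 0 ≤ F x y ∧ F x y ≤ ν x y)
    (c : G → ℕ) (u v : G) : 0 ≤ box F c τ u v ∧ box F c τ u v ≤ 2 := by
  have p1 := good_bounds c τ u
  have p2 := good_bounds c τ v
  refine ⟨mul_nonneg (mul_nonneg p1.1 p2.1) (expect_nonneg fun x _ => expect_nonneg fun y _ =>
    (hF x y).1), ?_⟩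
  unfold box good
  split_ifs with h1 h2
  · have hN : (0 : ℝ) < Fintype.card G := by exact_mod_cast Fintype.card_pos
    have c1 : (0 : ℝ) < (cls c u).card := by exact_mod_cast card_pos.2 (cls_nonempty c u)
    have c2 : (0 : ℝ) < (cls c v).card := by exact_mod_cast card_pos.2 (cls_nonempty c v)
    have h3 := (abs_le.1 (hν (fun w => if c w = c u then 1 else 0)
      (fun w => if c w = c v then 1 else 0) (fun x => by split_ifs <;> norm_num)
      (fun x => by split_ifs <;> norm_num))).2
    have h4 : 𝔼 u' ∈ cls c u, 𝔼 v' ∈ cls c v, (ν u' v' - 1) =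
        (𝔼 x, 𝔼 y, (ν x y - 1) * ((if c x = c u then 1 else 0) * (if c y = c v then 1 else 0)))
          * ((Fintype.card G / (cls c u).card) * (Fintype.card G / (cls c v).card)) := by
      rw [expect_cls]
      simp only [expect_cls c v]
      simp only [expect_mul]
      refine expect_congr rfl fun x _ => expect_congr rfl fun y _ => ?_
      ring
    have h5 : 𝔼 u' ∈ cls c u, 𝔼 v' ∈ cls c v, (ν u' v' - 1) ≤ 1 := by
      rw [h4]
      refine (mul_le_mul_of_nonneg_right (h3.trans hγ) (by positivity)).trans ?_
      rw [div_mul_div_comm, mul_div_assoc', div_le_one (by positivity)]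
      calc τ ^ 2 * (Fintype.card G * Fintype.card G : ℝ)
          = (τ * Fintype.card G) * (τ * Fintype.card G) := by ring
        _ ≤ _ := by gcongr
    simp only [expect_sub_distrib, expect_const (cls_nonempty c _)] at h5
    have h6 : 𝔼 u' ∈ cls c u, 𝔼 v' ∈ cls c v, F u' v' ≤ 𝔼 u' ∈ cls c u, 𝔼 v' ∈ cls c v, ν u' v' :=
      expect_le_expect fun x _ => expect_le_expect fun y _ => (hF x y).2
    linarith
  all_goals norm_num

/-- At most `M` cells of relative size at most `τ` cover a proportion at most `M * τ` of `G`. -/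
lemma bad_le {c : G → ℕ} {M : ℕ} (hc : ∀ v, c v < M) {τ : ℝ} (hτ : 0 ≤ τ) :
    𝔼 v, (1 - good c τ v) ≤ M * τ := by
  classical
  have hN : (0 : ℝ) < Fintype.card G := by exact_mod_cast Fintype.card_pos
  rw [Fintype.expect_eq_sum_div_card, div_le_iff₀ hN]
  rw [← sum_fiberwise_of_maps_to (s := univ) (t := range M) (g := c) (by simpa using hc)]
  have : ∀ k ∈ range M, ∑ v ∈ univ.filter (fun v => c v = k), (1 - good c τ v)
      ≤ τ * Fintype.card G := by
    intro k _
    rcases (univ.filter fun v => c v = k).eq_empty_or_nonempty with h | ⟨v, hv⟩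
    · rw [h, sum_empty]; positivity
    · have hv' : c v = k := by simpa using hv
      have e : (univ.filter fun w => c w = k) = cls c v := by rw [cls, hv']
      rw [e]
      have : ∑ w ∈ cls c v, (1 - good c τ w) = (cls c v).card * (1 - good c τ v) := by
        rw [← nsmul_eq_mul, ← sum_const]
        exact sum_congr rfl fun w hw => by rw [good_congr (mem_cls.1 hw)]
      rw [this, good]
      split_ifs with h
      · simp; positivity
      · push Not at h
        linarith
  refine (sum_le_sum this).trans ?_
  rw [sum_const, card_range, nsmul_eq_mul]
  linarith

/-- Small cells carry little of the mass of `F ≤ ν`, since the mass of `ν` is close to uniform. -/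
lemma tail_le {ν F : G → G → ℝ} {γ τ : ℝ} (hτ : 0 ≤ τ)
    (hν : CutLe (fun x y => ν x y - 1) γ) (hF : ∀ x y, 0 ≤ F x y ∧ F x y ≤ ν x y)
    {c : G → ℕ} {M : ℕ} (hc : ∀ v, c v < M) :
    𝔼 x, 𝔼 y, F x y * (1 - good c τ x * good c τ y) ≤ 2 * (M * τ + γ) := by
  have h0 := bad_le hc hτ
  have hb : ∀ x, 0 ≤ 1 - good c τ x ∧ 1 - good c τ x ≤ 1 := fun x => by
    have := good_bounds c τ x; constructor <;> linarith
  have h1 := (abs_le.1 (hν (fun x => 1 - good c τ x) (fun _ => 1) hb (fun _ => by norm_num))).2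
  have h2 := (abs_le.1 (hν (fun _ => 1) (fun x => 1 - good c τ x) (fun _ => by norm_num) hb)).2
  simp only [mul_one, one_mul] at h1 h2
  have h3 : 𝔼 x, 𝔼 y, F x y * (1 - good c τ x * good c τ y) ≤
      𝔼 x, 𝔼 y, ((ν x y - 1) * (1 - good c τ x) + (ν x y - 1) * (1 - good c τ y)
        + ((1 - good c τ x) + (1 - good c τ y))) := by
    refine expect_le_expect fun x _ => expect_le_expect fun y _ => ?_
    have g1 := good_bounds c τ x
    have g2 := good_bounds c τ y
    have f := hF x y
    have : 0 ≤ 1 - good c τ x * good c τ y := by nlinarith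
    have i1 := mul_le_mul_of_nonneg_right f.2 this
    have i2 : 0 ≤ ν x y * ((1 - good c τ x) * (1 - good c τ y)) :=
      mul_nonneg (f.1.trans f.2) (mul_nonneg (hb x).1 (hb y).1)
    nlinarith
  have h4 : 𝔼 x : G, 𝔼 y : G, ((1 - good c τ x) + (1 - good c τ y)) =
      𝔼 v, (1 - good c τ v) + 𝔼 v, (1 - good c τ v) := by
    simp only [expect_add_distrib, Fintype.expect_const]
  rw [show (𝔼 x, 𝔼 y, ((ν x y - 1) * (1 - good c τ x) + (ν x y - 1) * (1 - good c τ y)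
        + ((1 - good c τ x) + (1 - good c τ y)))) =
      (𝔼 x, 𝔼 y, (ν x y - 1) * (1 - good c τ x)) + (𝔼 x, 𝔼 y, (ν x y - 1) * (1 - good c τ y))
        + 𝔼 x : G, 𝔼 y : G, ((1 - good c τ x) + (1 - good c τ y)) by
      simp only [← expect_add_distrib]] at h3
  linarith

end

/-! ### Weak regularity relative to a pseudorandom weight -/

/-- If some `F i` is not close to its box average, then splitting the cells along the two sets that
witness this multiplies the number of cells by at most four and increases the total energy by at
least `ε² / 2`. -/
lemma energy_step {G : Type*} [Fintype G] [Nonempty G] {F : Fin 3 → G → G → ℝ} {τ β ε : ℝ} {M : ℕ}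
    (hβ0 : 0 ≤ β) (hβ : β ≤ ε ^ 2 / 32) (hε0 : 0 < ε) (hε1 : ε ≤ 1)
    (hF : ∀ i x y, 0 ≤ F i x y)
    (hb : ∀ i c x y, 0 ≤ box (F i) c τ x y ∧ box (F i) c τ x y ≤ 2)
    (ht : ∀ i (c : G → ℕ), (∀ v, c v < 4 * M) →
      𝔼 x, 𝔼 y, F i x y * (1 - good c τ x * good c τ y) ≤ β)
    {c : G → ℕ} (hc : ∀ v, c v < M) {i : Fin 3}
    (hi : ¬ CutLe (fun x y => F i x y - box (F i) c τ x y) ε) :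
    ∃ c' : G → ℕ, (∀ v, c' v < 4 * M) ∧
      (∑ i, 𝔼 x, 𝔼 y, box (F i) c τ x y ^ 2) + ε ^ 2 / 2
        ≤ ∑ i, 𝔼 x, 𝔼 y, box (F i) c' τ x y ^ 2 := by
  classical
  obtain ⟨u, v, hu, hv, huv⟩ := exists_boole_of_not_cutLe hi
  -- the common refinement of `c` with the partitions given by `u` and `v`
  let c' : G → ℕ := fun x => 4 * c x + 2 * (if u x = 1 then 1 else 0) + (if v x = 1 then 1 else 0)
  have hc' : ∀ x, c' x < 4 * M := by
    intro x
    have := hc x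
    simp only [c']
    split_ifs <;> omega
  have key : ∀ x y, c' x = c' y → c x = c y ∧ u x = u y ∧ v x = v y := by
    intro x y h
    simp only [c'] at h
    rcases hu x with h1 | h1 <;> rcases hu y with h2 | h2 <;> rcases hv x with h3 | h3 <;>
      rcases hv y with h4 | h4 <;> simp [h1, h2, h3, h4] at h ⊢ <;> omega
  have hcc : ∀ x y, c' x = c' y → c x = c y := fun x y h => (key x y h).1
  refine ⟨c', hc', ?_⟩
  have hen : ∀ j, (𝔼 x, 𝔼 y, box (F j) c τ x y ^ 2)
      + (𝔼 x, 𝔼 y, (box (F j) c' τ x y - box (F j) c τ x y) ^ 2) - 4 * β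
      ≤ 𝔼 x, 𝔼 y, box (F j) c' τ x y ^ 2 := fun j =>
    energy_le (hF j) hcc (hb j c) (ht j c' hc')
  have hsum := sum_le_sum fun j (_ : j ∈ univ) => hen j
  simp only [sum_sub_distrib, sum_add_distrib, sum_const, card_univ, Fintype.card_fin,
    nsmul_eq_mul] at hsum
  have hnn : ∀ j, 0 ≤ 𝔼 x, 𝔼 y, (box (F j) c' τ x y - box (F j) c τ x y) ^ 2 := fun j =>
    expect_nonneg fun x _ => expect_nonneg fun y _ => sq_nonneg _
  have hge := single_le_sum (fun j _ => hnn j) (mem_univ i)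
  have hcl := proj_close (φ := fun x y => u x * v y) (hF i) (ht i c' hc')
    (fun x x' y y' h1 h2 => by
      simp only [(key _ _ h1).2.1, (key _ _ h2).2.2])
    (fun x y => by rcases hu x with h | h <;> rcases hv y with h' | h' <;> simp [h, h'])
  have hd : ε - β ≤ |𝔼 x, 𝔼 y, (u x * v y) * (box (F i) c' τ x y - box (F i) c τ x y)| := by
    have e1 : 𝔼 x, 𝔼 y, (F i x y - box (F i) c τ x y) * (u x * v y)
        = (𝔼 x, 𝔼 y, F i x y * (u x * v y) - 𝔼 x, 𝔼 y, box (F i) c' τ x y * (u x * v y))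
          + 𝔼 x, 𝔼 y, (u x * v y) * (box (F i) c' τ x y - box (F i) c τ x y) := by
      simp only [← expect_sub_distrib, ← expect_add_distrib]
      refine expect_congr rfl fun x _ => expect_congr rfl fun y _ => ?_
      ring
    rw [e1] at huv
    have := abs_add_le (𝔼 x, 𝔼 y, F i x y * (u x * v y)
      - 𝔼 x, 𝔼 y, box (F i) c' τ x y * (u x * v y))
      (𝔼 x, 𝔼 y, (u x * v y) * (box (F i) c' τ x y - box (F i) c τ x y))
    linarith
  have hw := wcs2 (fun x y => u x * v y) (fun _ _ => 1)
    (fun x y => box (F i) c' τ x y - box (F i) c τ x y)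
    (fun x y => by rcases hu x with h | h <;> rcases hv y with h' | h' <;> simp [h, h'])
  simp only [Fintype.expect_const, one_mul] at hw
  rw [← sq_abs] at hw
  have hsq : (ε - β) ^ 2 ≤ |𝔼 x, 𝔼 y, (u x * v y) * (box (F i) c' τ x y - box (F i) c τ x y)| ^ 2 :=
    pow_le_pow_left₀ (by nlinarith) hd 2
  have : ε ^ 2 / 2 + 12 * β ≤ (ε - β) ^ 2 := by nlinarith
  norm_num at hsum
  linarith

/-- Weak regularity for functions majorised by weights close to `1` in cut norm: one partition serves
all three functions, and the models `g i` dominate `F i` up to `κ` on every union of boxes. The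
energy is at most `12`, so that the iteration of `energy_step` stops in boundedly many steps. -/
theorem regularity (ε κ : ℝ) (hε0 : 0 < ε) (hε1 : ε ≤ 1) (hκ : 0 < κ) :
    ∃ γ : ℝ, 0 < γ ∧ ∀ (G : Type) [Fintype G] [Nonempty G] (ν F : Fin 3 → G → G → ℝ),
      (∀ i x y, 0 ≤ F i x y ∧ F i x y ≤ ν i x y) →
      (∀ i, CutLe (fun x y => ν i x y - 1) γ) →
      ∃ (c : G → ℕ) (g : Fin 3 → G → G → ℝ), (∀ i, Inv c (g i)) ∧
        (∀ i x y, 0 ≤ g i x y ∧ g i x y ≤ 2) ∧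
        (∀ i, CutLe (fun x y => F i x y - g i x y) ε) ∧
        ∀ i φ, Inv c φ → (∀ x y, 0 ≤ φ x y ∧ φ x y ≤ 1) →
          𝔼 x, 𝔼 y, F i x y * φ x y ≤ 𝔼 x, 𝔼 y, g i x y * φ x y + κ := by
  obtain ⟨K, hK⟩ := exists_nat_gt (12 / (ε ^ 2 / 2))
  rw [div_lt_iff₀ (by positivity)] at hK
  -- `β` bounds the mass on small cells, `τ` is the size threshold for at most `4 ^ K` cells
  obtain ⟨β, hβ⟩ : ∃ β, β = min (ε ^ 2 / 32) κ := ⟨_, rfl⟩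
  have hβ0 : 0 < β := by rw [hβ]; positivity
  have hβ1 : β ≤ ε ^ 2 / 32 := hβ ▸ min_le_left _ _
  have hβ2 : β ≤ κ := hβ ▸ min_le_right _ _
  obtain ⟨τ, hτ⟩ : ∃ τ : ℝ, τ = β / (4 * (4 ^ K : ℕ)) := ⟨_, rfl⟩
  have hτ0 : 0 < τ := by rw [hτ]; positivity
  refine ⟨min (β / 4) (τ ^ 2), by positivity, fun G _ _ ν F hF hν => ?_⟩
  have hb : ∀ i c x y, 0 ≤ box (F i) c τ x y ∧ box (F i) c τ x y ≤ 2 := fun i c x y =>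
    box_bounds hτ0 (min_le_right _ _) (hν i) (hF i) c x y
  have ht : ∀ i (c : G → ℕ), (∀ v, c v < 4 ^ K) →
      𝔼 x, 𝔼 y, F i x y * (1 - good c τ x * good c τ y) ≤ β := by
    intro i c hc
    refine (tail_le hτ0.le (hν i) (hF i) hc).trans ?_
    have h1 : ((4 ^ K : ℕ) : ℝ) * τ = β / 4 := by
      have : ((4 ^ K : ℕ) : ℝ) ≠ 0 := by positivity
      rw [hτ]; field_simp
    have h2 : min (β / 4) (τ ^ 2) ≤ β / 4 := min_le_left _ _
    rw [h1]; linarith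
  by_contra hno
  have step : ∀ n ≤ K, ∃ c : G → ℕ, (∀ v, c v < 4 ^ n) ∧
      n * (ε ^ 2 / 2) ≤ ∑ i, 𝔼 x, 𝔼 y, box (F i) c τ x y ^ 2 := by
    intro n
    induction n with
    | zero =>
      intro _
      refine ⟨fun _ => 0, fun _ => by norm_num, ?_⟩
      simp only [Nat.cast_zero, zero_mul]
      exact sum_nonneg fun i _ => expect_nonneg fun x _ => expect_nonneg fun y _ => sq_nonneg _
    | succ n ih =>
      intro hn
      obtain ⟨c, hc, hE⟩ := ih (by omega)
      have hle : 4 * 4 ^ n ≤ 4 ^ K := by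
        rw [← pow_succ']
        exact Nat.pow_le_pow_right (by norm_num) hn
      have hcK : ∀ v, c v < 4 ^ K := fun v => by have := hc v; omega
      have : ∃ i, ¬ CutLe (fun x y => F i x y - box (F i) c τ x y) ε := by
        by_contra! hall
        refine hno ⟨c, fun i => box (F i) c τ, fun i => box_inv _ _ _, fun i => hb i c, hall,
          fun i φ hφ hφ1 => ?_⟩
        have := (abs_le.1 (proj_close (fun x y => (hF i x y).1) (ht i c hcK) hφ hφ1)).2
        linarith
      obtain ⟨i, hi⟩ := this
      obtain ⟨c', hc', hE'⟩ := energy_step hβ0.le hβ1 hε0 hε1 (fun i x y => (hF i x y).1) hb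
        (fun i c h => ht i c fun v => (h v).trans_le hle) hc hi
      refine ⟨c', fun v => by rw [pow_succ']; exact hc' v, ?_⟩
      push_cast
      linarith
  obtain ⟨c, -, hE⟩ := step K le_rfl
  have : ∑ i, 𝔼 x, 𝔼 y, box (F i) c τ x y ^ 2 ≤ ∑ i : Fin 3, (4 : ℝ) :=
    sum_le_sum fun i _ => expect_le univ_nonempty fun x _ => expect_le univ_nonempty fun y _ => by
      nlinarith [hb i c x y]
  simp at this
  linarith

/-! ### Triangle removal by unions of boxes -/

/-- The tripartite graph on three copies of `G` in which `H i` joins the `i`-th copy to the next one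
in cyclic order. -/
def tripartite {G : Type*} (H : Fin 3 → G → G → Prop) : SimpleGraph (Fin 3 × G) where
  Adj p q := (q.1 = p.1 + 1 ∧ H p.1 p.2 q.2) ∨ (p.1 = q.1 + 1 ∧ H q.1 q.2 p.2)
  symm := ⟨fun _ _ h => h.symm⟩
  loopless := ⟨fun p h => by
    have : ∀ i : Fin 3, i ≠ i + 1 := by decide
    rcases h with h | h <;> exact this _ h.1⟩

lemma tripartite_adj {G : Type*} {H : Fin 3 → G → G → Prop} {i : Fin 3} {u v : G} :
    (tripartite H).Adj (i, u) (i + 1, v) ↔ H i u v := by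
  have : ∀ i : Fin 3, i ≠ i + 1 + 1 := by decide
  simp [tripartite, this i]

lemma tripartite_clique {G : Type*} {H : Fin 3 → G → G → Prop} {p q r : Fin 3 × G}
    (h1 : (tripartite H).Adj p q) (h2 : (tripartite H).Adj p r) (h3 : (tripartite H).Adj q r) :
    ∃ x y z, (H 0 x y ∧ H 1 y z ∧ H 2 z x) ∧
      ({p, q, r} : Set (Fin 3 × G)) = {(0, x), (1, y), (2, z)} := by
  obtain ⟨i, a⟩ := p
  obtain ⟨j, b⟩ := q
  obtain ⟨k, c⟩ := r
  simp only [tripartite] at h1 h2 h3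
  fin_cases i <;> fin_cases j <;> simp at h1 <;> fin_cases k <;> simp at h2 h3
  · exact ⟨a, b, c, ⟨h1, h3, h2⟩, rfl⟩
  · exact ⟨a, c, b, ⟨h2, h3, h1⟩, by ext; simp; tauto⟩
  · exact ⟨b, a, c, ⟨h1, h2, h3⟩, by ext; simp; tauto⟩
  · exact ⟨c, a, b, ⟨h2, h1, h3⟩, by ext; simp; tauto⟩
  · exact ⟨b, c, a, ⟨h3, h2, h1⟩, by ext; simp; tauto⟩
  · exact ⟨c, b, a, ⟨h3, h1, h2⟩, by ext; simp; tauto⟩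

open Classical in
/-- The triangle removal lemma for tripartite graphs. -/
lemma removal (ε : ℝ) (hε : 0 < ε) : ∃ β : ℝ, 0 < β ∧ ∀ (G : Type) [Fintype G]
    (H : Fin 3 → G → G → Prop),
    ((univ.filter fun t : G × G × G => H 0 t.1 t.2.1 ∧ H 1 t.2.1 t.2.2 ∧ H 2 t.2.2 t.1).card : ℝ)
      < β * (Fintype.card G : ℝ) ^ 3 →
    ∃ H' : Fin 3 → G → G → Prop, (∀ x y z, H' 0 x y → H' 1 y z → H' 2 z x → False) ∧
      ∀ i, ((univ.filter fun p : G × G => H i p.1 p.2 ∧ ¬ H' i p.1 p.2).card : ℝ)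
        ≤ ε * (Fintype.card G : ℝ) ^ 2 := by
  refine ⟨SimpleGraph.triangleRemovalBound (ε / 9) * 27,
    mul_pos (SimpleGraph.triangleRemovalBound_pos (by positivity)) (by norm_num),
    fun G _ H hH => ?_⟩
  have hcard : Fintype.card (Fin 3 × G) = 3 * Fintype.card G := by simp
  have hcl : ((tripartite H).cliqueFinset 3).card ≤ (univ.filter fun t : G × G × G =>
      H 0 t.1 t.2.1 ∧ H 1 t.2.1 t.2.2 ∧ H 2 t.2.2 t.1).card := by
    refine (card_le_card (t := image (fun t : G × G × G =>
      ({(0, t.1), (1, t.2.1), (2, t.2.2)} : Finset (Fin 3 × G))) _) ?_).trans card_image_le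
    intro s hs
    rw [SimpleGraph.mem_cliqueFinset_iff, SimpleGraph.is3Clique_iff] at hs
    obtain ⟨p, q, r, h1, h2, h3, rfl⟩ := hs
    obtain ⟨x, y, z, h, e⟩ := tripartite_clique h1 h2 h3
    rw [mem_image]
    refine ⟨(x, y, z), by simpa using h, ?_⟩
    apply Finset.coe_injective
    simpa using e.symm
  obtain ⟨G', hG', hdec, hlt, hfree⟩ := SimpleGraph.triangle_removal (G := tripartite H)
    (ε := ε / 9) (lt_of_le_of_lt (by exact_mod_cast hcl) (hH.trans_eq (by
      rw [hcard]; push_cast; ring)))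
  refine ⟨fun i u v => G'.Adj (i, u) (i + 1, v), fun x y z h1 h2 h3 => ?_, fun i => ?_⟩
  · refine hfree {(0, x), (1, y), (2, z)} (SimpleGraph.is3Clique_iff.2
      ⟨_, _, _, h1, ?_, h2, rfl⟩)
    exact (show G'.Adj (2, z) (0, x) from h3).symm
  · have hsub : (univ.filter fun p : G × G => H i p.1 p.2 ∧ ¬ G'.Adj (i, p.1) (i + 1, p.2)).card
        ≤ ((tripartite H).edgeFinset \ G'.edgeFinset).card := by
      refine card_le_card_of_injOn (fun p => s((i, p.1), (i + 1, p.2))) ?_ ?_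
      · intro p hp
        simp only [coe_filter, mem_univ, true_and, Set.mem_ofPred_eq] at hp
        simp only [coe_sdiff, SimpleGraph.coe_edgeFinset, Set.mem_sdiff, SimpleGraph.mem_edgeSet]
        exact ⟨tripartite_adj.2 hp.1, hp.2⟩
      · intro p _ q _ h
        have : ∀ i : Fin 3, i ≠ i + 1 := by decide
        simp [this i] at h
        exact Prod.ext h.1 h.2
    rw [card_sdiff_of_subset (SimpleGraph.edgeFinset_mono hG')] at hsub
    have h1 := card_le_card (SimpleGraph.edgeFinset_mono hG')
    have h2 := (Nat.cast_le (α := ℝ)).2 hsub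
    rw [Nat.cast_sub h1] at h2
    refine le_trans (le_of_eq (by congr!)) (h2.trans (hlt.le.trans ?_))
    rw [hcard]; push_cast
    linarith

open Classical in
lemma box_zero {G : Type*} [Fintype G] (F : G → G → ℝ) (c : G → ℕ) (u v : G) :
    box F c 0 u v = 𝔼 u' ∈ cls c u, 𝔼 v' ∈ cls c v, F u' v' := by
  simp [box, good]

open Classical in
/-- Triangle removal for a tripartite graph that is a union of boxes, where the triangle-free graph
is again a union of boxes: keep those boxes that lose less than a third of their edges. In a
triangle of boxes that are kept, a random triple would be a triangle of `H'` with positive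
probability. -/
lemma removal_box (ε : ℝ) (hε : 0 < ε) : ∃ β : ℝ, 0 < β ∧ ∀ (G : Type) [Fintype G] [Nonempty G]
    (c : G → ℕ) (H : Fin 3 → G → G → Prop),
    (∀ i, Inv c fun u v => if H i u v then 1 else 0) →
    (𝔼 x, 𝔼 y, 𝔼 z, if H 0 x y ∧ H 1 y z ∧ H 2 z x then (1 : ℝ) else 0) < β →
    ∃ E : Fin 3 → G → G → Prop, (∀ i, Inv c fun u v => if E i u v then 1 else 0) ∧
      (∀ x y z, E 0 x y → E 1 y z → E 2 z x → False) ∧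
      ∀ i, (𝔼 x, 𝔼 y, if H i x y ∧ ¬ E i x y then (1 : ℝ) else 0) ≤ 3 * ε := by
  obtain ⟨β, hβ, hrem⟩ := removal ε hε
  refine ⟨β, hβ, fun G _ _ c H hinv hH => ?_⟩
  have hN : (0 : ℝ) < Fintype.card G := by exact_mod_cast Fintype.card_pos
  obtain ⟨H', hfree, hloss⟩ := hrem G H (by
    rw [← sum_boole]
    have e : 𝔼 x, 𝔼 y, 𝔼 z, (if H 0 x y ∧ H 1 y z ∧ H 2 z x then (1 : ℝ) else 0)
        = 𝔼 t : G × G × G, if H 0 t.1 t.2.1 ∧ H 1 t.2.1 t.2.2 ∧ H 2 t.2.2 t.1 then 1 else 0 := by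
      rw [expect_prod (fun x (p : G × G) =>
        if H 0 x p.1 ∧ H 1 p.1 p.2 ∧ H 2 p.2 x then (1 : ℝ) else 0)]
      refine expect_congr rfl fun x _ => ?_
      rw [expect_prod (fun y z => if H 0 x y ∧ H 1 y z ∧ H 2 z x then (1 : ℝ) else 0)]
    rw [e, Fintype.expect_eq_sum_div_card, div_lt_iff₀ (by positivity)] at hH
    refine hH.trans_eq ?_
    simp only [Fintype.card_prod]
    push_cast
    ring)
  have hl : ∀ i, 𝔼 x, 𝔼 y, (if H i x y ∧ ¬ H' i x y then (1 : ℝ) else 0) ≤ ε := by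
    intro i
    rw [← expect_prod, Fintype.expect_eq_sum_div_card, sum_boole, div_le_iff₀ (by positivity)]
    refine (hloss i).trans_eq ?_
    simp only [Fintype.card_prod]
    push_cast
    ring
  -- the proportion of a box that is not in `H'`; the size threshold `0` retains all cells
  let ρ : Fin 3 → G → G → ℝ := fun i => box (fun u v => if H' i u v then 0 else 1) c 0
  have hρ : ∀ i, Inv c (ρ i) := fun i => box_inv _ _ _
  refine ⟨fun i u v => H i u v ∧ ρ i u v < 1 / 3, fun i => ?_, fun x y z h0 h1 h2 => ?_,
    fun i => ?_⟩
  · intro u u' v v' hu hv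
    have h1 := hinv i u u' v v' hu hv
    have h2 := hρ i u u' v v' hu hv
    by_cases a : H i u v <;> by_cases b : H i u' v' <;> simp_all
  · have key : (1 : ℝ) ≤ ρ 0 x y + ρ 1 y z + ρ 2 z x := by
      simp only [ρ, box_zero]
      have e0 : 𝔼 x' ∈ cls c x, 𝔼 y' ∈ cls c y, (if H' 0 x' y' then (0 : ℝ) else 1)
          = 𝔼 x' ∈ cls c x, 𝔼 y' ∈ cls c y, 𝔼 z' ∈ cls c z, (if H' 0 x' y' then (0 : ℝ) else 1) := by
        simp only [expect_const (cls_nonempty c _)]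
      have e1 : 𝔼 y' ∈ cls c y, 𝔼 z' ∈ cls c z, (if H' 1 y' z' then (0 : ℝ) else 1)
          = 𝔼 x' ∈ cls c x, 𝔼 y' ∈ cls c y, 𝔼 z' ∈ cls c z, (if H' 1 y' z' then (0 : ℝ) else 1) := by
        simp only [expect_const (cls_nonempty c _)]
      have e2 : 𝔼 z' ∈ cls c z, 𝔼 x' ∈ cls c x, (if H' 2 z' x' then (0 : ℝ) else 1)
          = 𝔼 x' ∈ cls c x, 𝔼 y' ∈ cls c y, 𝔼 z' ∈ cls c z, (if H' 2 z' x' then (0 : ℝ) else 1) := by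
        rw [expect_comm]
        simp only [expect_const (cls_nonempty c _)]
      rw [e0, e1, e2]
      simp only [← expect_add_distrib]
      refine le_expect (cls_nonempty c _) fun x' _ => le_expect (cls_nonempty c _) fun y' _ =>
        le_expect (cls_nonempty c _) fun z' _ => ?_
      have := hfree x' y' z'
      split_ifs <;> norm_num
      tauto
    linarith [h0.2, h1.2, h2.2]
  · have hp := proj2 (fun u v => if H' i u v then (0 : ℝ) else 1)
      (fun u v => if H i u v then (1 : ℝ) else 0) c 0 (hinv i)
    have hg : ∀ u, good c 0 u = 1 := fun u => by simp [good]
    simp only [hg, one_mul] at hp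
    have h3 : 𝔼 x, 𝔼 y, (if H i x y ∧ ¬ (H i x y ∧ ρ i x y < 1 / 3) then (1 : ℝ) else 0)
        ≤ 3 * 𝔼 x, 𝔼 y, ρ i x y * (if H i x y then (1 : ℝ) else 0) := by
      simp only [mul_expect]
      refine expect_le_expect fun x _ => expect_le_expect fun y _ => ?_
      have hnn : 0 ≤ ρ i x y := by
        simp only [ρ, box_zero]
        refine expect_nonneg fun x _ => expect_nonneg fun y _ => ?_
        split_ifs <;> norm_num
      by_cases a : H i x y
      · by_cases b : ρ i x y < 1 / 3
        · simp only [a, b, and_self, not_true, if_true, if_false, and_false]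
          linarith
        · simp only [a, b, and_false, not_false_eq_true, and_self, if_true]
          linarith
      · simp [a]
    refine le_trans (le_of_eq (by congr!)) (h3.trans ?_)
    rw [hp]
    refine mul_le_mul_of_nonneg_left (le_trans (le_of_eq ?_) (hl i)) (by norm_num)
    refine expect_congr rfl fun x _ => expect_congr rfl fun y _ => ?_
    by_cases a : H i x y <;> by_cases b : H' i x y <;> simp [a, b]

/-! ### The linear forms condition in twelve independent slots -/

lemma expect_cons {G : Type*} [Fintype G] {n : ℕ} (f : (Fin (n + 1) → G) → ℝ) :
    𝔼 v, f v = 𝔼 x, 𝔼 v : Fin n → G, f (Fin.cons x v) := by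
  rw [← expect_prod]
  exact (Fintype.expect_equiv (Fin.consEquiv fun _ => G) _ _ fun _ => rfl).symm

/-- The index among `x, x', y, y', z, z'` of the first argument of each of the twelve factors, taken
in the order of `cornerFactors` and with cyclic arguments as in `J`. -/
def lft : Fin 12 → Fin 6 := ![0, 1, 0, 1, 4, 4, 5, 5, 2, 3, 2, 3]

/-- The index of the second argument of each of the twelve factors; see `lft`. -/
def rgt : Fin 12 → Fin 6 := ![2, 2, 3, 3, 0, 1, 0, 1, 4, 4, 5, 5]

/-- The average `J` with its twelve functions listed in the order of `cornerFactors`. -/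
noncomputable def Phi {G : Type*} [Fintype G] (s : Fin 12 → G → G → ℝ) : ℝ :=
  𝔼 v : Fin 6 → G, ∏ i, s i (v (lft i)) (v (rgt i))

lemma J_eq_Phi {G : Type*} [Fintype G] (A B C : Fin 4 → G → G → ℝ) :
    J A B C = Phi ![A 0, A 1, A 2, A 3, C 0, C 2, C 1, C 3, B 0, B 1, B 2, B 3] := by
  unfold Phi
  simp only [expect_cons]
  unfold J
  refine expect_congr rfl fun x _ => expect_congr rfl fun x' _ => expect_congr rfl fun y _ =>
    expect_congr rfl fun y' _ => expect_congr rfl fun z _ => expect_congr rfl fun z' _ => ?_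
  rw [Fintype.expect_eq_sum_div_card]
  simp only [Fintype.card_unique, Nat.cast_one, div_one]
  simp only [Fin.prod_univ_succ]
  simp only [lft, rgt]
  simp
  change _ = A 0 x y * (A 1 x' y * (A 2 x y' * (A 3 x' y' * (C 0 z x * (C 2 z x' * (C 1 z' x *
    (C 3 z' x' * (B 0 y z * (B 1 y' z * (B 2 y z' * B 3 y' z'))))))))))
  ring

lemma Phi_half {G : Type*} [Fintype G] (s : Fin 12 → G → G → ℝ) (i : Fin 12) (f : G → G → ℝ) :
    Phi (Function.update s i fun x y => (1 + f x y) / 2)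
      = (Phi (Function.update s i 1) + Phi (Function.update s i f)) / 2 := by
  unfold Phi
  rw [← expect_add_distrib, expect_div]
  refine expect_congr rfl fun v _ => ?_
  have : ∀ h : G → G → ℝ, ∏ j, (Function.update s i h) j (v (lft j)) (v (rgt j))
      = h (v (lft i)) (v (rgt i)) * ∏ j ∈ univ.erase i, s j (v (lft j)) (v (rgt j)) := by
    intro h
    rw [← mul_prod_erase univ _ (mem_univ i), Function.update_self]
    congr 1
    refine prod_congr rfl fun j hj => ?_
    rw [Function.update_of_ne (ne_of_mem_erase hj)]
  rw [this, this, this]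
  simp only [Pi.one_apply]
  ring

/-- The linear forms condition is inherited by `(1 + ω) / 2`: by `Phi_half`, each occurrence of this
weight replaces an average by the mean of two averages already controlled. -/
lemma Phi_close {G : Type*} [Fintype G] {ω : Fin 12 → G → G → ℝ} {γ : ℝ}
    (h : ∀ s : Fin 12 → G → G → ℝ, (∀ i, s i = 1 ∨ s i = ω i) → |Phi s - 1| ≤ γ)
    (T : Finset (Fin 12)) : ∀ s : Fin 12 → G → G → ℝ,
    (∀ i ∈ T, s i = 1 ∨ s i = ω i ∨ s i = fun x y => (1 + ω i x y) / 2) →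
    (∀ i ∉ T, s i = 1 ∨ s i = ω i) → |Phi s - 1| ≤ γ := by
  induction T using Finset.induction_on with
  | empty => exact fun s _ h2 => h s fun i => h2 i (by simp)
  | insert i T hi ih =>
    intro s h1 h2
    have hup : ∀ f : G → G → ℝ, (f = 1 ∨ f = ω i) → |Phi (Function.update s i f) - 1| ≤ γ := by
      intro f hf
      refine ih _ (fun j hj => ?_) (fun j hj => ?_)
      · have : j ≠ i := fun e => hi (e ▸ hj)
        rw [Function.update_of_ne this]
        exact h1 j (mem_insert_of_mem hj)
      · by_cases e : j = i
        · subst e; rwa [Function.update_self]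
        · rw [Function.update_of_ne e]
          exact h2 j (by simp [e, hj])
    rcases h1 i (mem_insert_self _ _) with e | e | e
    · have := hup _ (Or.inl e); rwa [Function.update_eq_self] at this
    · have := hup _ (Or.inr e); rwa [Function.update_eq_self] at this
    · have e' : s = Function.update s i fun x y => (1 + ω i x y) / 2 := by
        rw [← e, Function.update_eq_self]
      rw [e', Phi_half]
      have a := abs_le.1 (hup _ (Or.inl rfl))
      have b := abs_le.1 (hup _ (Or.inr rfl))
      exact abs_le.2 ⟨by linarith [a.1, b.1], by linarith [a.2, b.2]⟩

lemma LF_of_Phi {G : Type*} [Fintype G] {a b c : G → G → ℝ} {γ : ℝ}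
    (h : ∀ s : Fin 12 → G → G → ℝ, (∀ i, s i = 1 ∨ s i = ![a, a, a, a, c, c, c, c, b, b, b, b] i) →
      |Phi s - 1| ≤ γ) : LF γ a b c := by
  intro A B C hA hB hC
  rw [J_eq_Phi]
  refine h _ fun i => ?_
  fin_cases i
  exacts [hA 0, hA 1, hA 2, hA 3, hC 0, hC 2, hC 1, hC 3, hB 0, hB 1, hB 2, hB 3]

lemma LF_half_of_Phi {G : Type*} [Fintype G] {a b c : G → G → ℝ} {γ : ℝ}
    (h : ∀ s : Fin 12 → G → G → ℝ, (∀ i, s i = 1 ∨ s i = ![a, a, a, a, c, c, c, c, b, b, b, b] i) →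
      |Phi s - 1| ≤ γ) :
    LF γ (fun x y => (1 + a x y) / 2) (fun x y => (1 + b x y) / 2)
      (fun x y => (1 + c x y) / 2) := by
  refine LF_of_Phi fun s hs => Phi_close h univ s (fun i _ => ?_) (fun i hi => by simp at hi)
  rcases hs i with e | e
  · exact Or.inl e
  · right; right
    rw [e]
    fin_cases i <;> rfl

/-! ### The relative removal lemma -/

/-- Under the linear forms condition the weight is close to `1` in cut norm. -/
lemma LF.cutLe {G : Type*} [Fintype G] [Nonempty G] {κ : ℝ} {a b c : G → G → ℝ} (hκ : 0 ≤ κ)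
    (hκ1 : κ ≤ 1) (h : LF (κ ^ 4) a b c) : CutLe (fun x y => a x y - 1) (4 * κ) := by
  intro u v hu hv
  have h1 : LF (κ ^ 4) a 1 1 := by
    intro A B C hA hB hC
    exact h A B C hA (fun i => Or.inl (by simpa using hB i)) (fun i => Or.inl (by simpa using hC i))
  have := LF.decouple hκ hκ1 h1 (fun _ x => u x) (fun _ _ => 1) (fun y _ => v y) (fun _ _ => 1)
    (fun z x => by simpa [abs_of_nonneg (hu x).1] using (hu x).2) (fun _ _ => by simp)
    (fun z x => by simpa [abs_of_nonneg (hv z).1] using (hv z).2) (fun _ _ => by simp)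
  simpa only [mul_one, Fintype.expect_const, fun x y => mul_comm (v y) (u x)] using this

lemma CutLe.quarter {G : Type*} [Fintype G] {ε : ℝ} {F g : G → G → ℝ}
    (h : CutLe (fun x y => F x y - g x y) ε) (hε : 0 ≤ ε) :
    CutLe (fun x y => F x y / 4 - g x y / 4) ε := by
  intro u v hu hv
  have e : 𝔼 x, 𝔼 y, (F x y / 4 - g x y / 4) * (u x * v y)
      = (1 / 4) * 𝔼 x, 𝔼 y, (F x y - g x y) * (u x * v y) := by
    simp only [mul_expect]
    refine expect_congr rfl fun x _ => expect_congr rfl fun y _ => ?_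
    ring
  have := h u v hu hv
  rw [e, abs_mul, abs_of_pos (by norm_num : (0 : ℝ) < 1 / 4)]
  linarith

lemma tri_quarter {G : Type*} [Fintype G] (a b c : G → G → ℝ) :
    tri (fun x y => a x y / 4) (fun x y => b x y / 4) (fun x y => c x y / 4)
      = tri a b c / 64 := by
  unfold tri
  simp only [expect_div]
  refine expect_congr rfl fun x _ => expect_congr rfl fun y _ => expect_congr rfl fun z _ => ?_
  ring

open Classical in
/-- The removal lemma relative to a pseudorandom weight: if `F ≤ ω` has small triangle density, then
a triangle-free graph carries all but `δ` of the mass of each `F i`. -/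
theorem relative_removal (δ : ℝ) (hδ : 0 < δ) : ∃ η t₀ : ℝ, 0 < η ∧ η ≤ 1 ∧ 0 < t₀ ∧
    ∀ (G : Type) [Fintype G] [Nonempty G] (ω F : Fin 3 → G → G → ℝ),
      (∀ i x y, 0 ≤ F i x y ∧ F i x y ≤ ω i x y) →
      (∀ s : Fin 12 → G → G → ℝ, (∀ i, s i = 1 ∨
        s i = ![ω 0, ω 0, ω 0, ω 0, ω 2, ω 2, ω 2, ω 2, ω 1, ω 1, ω 1, ω 1] i) →
          |Phi s - 1| ≤ η) →
      tri (F 0) (F 1) (F 2) ≤ t₀ →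
      ∃ E : Fin 3 → G → G → Prop, (∀ x y z, E 0 x y → E 1 y z → E 2 z x → False) ∧
        ∀ i, (𝔼 x, 𝔼 y, F i x y * if E i x y then 0 else 1) ≤ δ := by
  obtain ⟨β, hβ, hrem⟩ := removal_box (δ / 12) (by positivity)
  obtain ⟨m, hm⟩ : ∃ m, m = β * (δ / 4) ^ 3 := ⟨_, rfl⟩
  have hm0 : 0 < m := by rw [hm]; positivity
  obtain ⟨ε, hε0, hε1, hcount⟩ := relative_counting (min 1 (m / 256)) (by positivity)
    (min_le_left _ _)
  obtain ⟨γ, hγ0, hreg⟩ := regularity ε (δ / 4) hε0 hε1 (by positivity)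
  obtain ⟨κ, hκ⟩ : ∃ κ, κ = min (γ / 4) 1 := ⟨_, rfl⟩
  have hκ0 : 0 < κ := by rw [hκ]; positivity
  have hκ1 : κ ≤ 1 := hκ ▸ min_le_right _ _
  have hκγ : 4 * κ ≤ γ := by
    have : κ ≤ γ / 4 := hκ ▸ min_le_left _ _
    linarith
  refine ⟨min (ε ^ 4) (κ ^ 4), m / 4, by positivity,
    (min_le_right _ _).trans (pow_le_one₀ hκ0.le hκ1), by positivity,
    fun G _ _ ω F hF hΦ hT => ?_⟩
  have lf : LF (κ ^ 4) (ω 0) (ω 1) (ω 2) :=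
    LF_of_Phi fun s hs => (hΦ s hs).trans (min_le_right _ _)
  have lfh := LF_half_of_Phi fun s hs => (hΦ s hs).trans (min_le_left (ε ^ 4) (κ ^ 4))
  have hcut : ∀ i, CutLe (fun x y => ω i x y - 1) γ := by
    have hh : ∀ {a b c : G → G → ℝ}, LF (κ ^ 4) a b c → CutLe (fun x y => a x y - 1) γ :=
      fun h u v hu hv => (h.cutLe hκ0.le hκ1 u v hu hv).trans hκγ
    intro i
    fin_cases i
    exacts [hh lf, hh lf.rot, hh lf.rot.rot]
  obtain ⟨c, g, hinv, hg, hFg, htest⟩ := hreg G ω F hF hcut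
  -- after division by `4` the model satisfies `g / 4 ≤ 1 / 2 ≤ (1 + ω) / 2`
  have hmodel : ∀ i, Model ε (fun x y => (1 + ω i x y) / 2) (fun x y => F i x y / 4)
      (fun x y => g i x y / 4) := by
    intro i
    refine ⟨fun x y => ?_, (hFg i).quarter hε0.le⟩
    have h1 := hF i x y
    have h2 := hg i x y
    refine ⟨?_, ?_, ?_, ?_, ?_⟩ <;> linarith
  have hc := hcount G _ _ _ lfh _ _ _ _ _ _ (hmodel 0) (hmodel 1) (hmodel 2)
  rw [tri_quarter, tri_quarter] at hc
  have hTg : tri (g 0) (g 1) (g 2) ≤ m / 2 := by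
    have h1 := (abs_le.1 hc).1
    have h2 := min_le_right 1 (m / 256)
    linarith
  -- the boxes where the model is not negligible form a graph with few triangles
  let H : Fin 3 → G → G → Prop := fun i x y => δ / 4 ≤ g i x y
  have hHT : (𝔼 x, 𝔼 y, 𝔼 z, if H 0 x y ∧ H 1 y z ∧ H 2 z x then (1 : ℝ) else 0) < β := by
    have h1 : (δ / 4) ^ 3 * (𝔼 x, 𝔼 y, 𝔼 z, if H 0 x y ∧ H 1 y z ∧ H 2 z x then (1 : ℝ) else 0)
        ≤ tri (g 0) (g 1) (g 2) := by
      unfold tri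
      simp only [mul_expect]
      refine expect_le_expect fun x _ => expect_le_expect fun y _ => expect_le_expect fun z _ => ?_
      have g0 := (hg 0 x y).1
      have g1 := (hg 1 y z).1
      have g2 := (hg 2 z x).1
      split_ifs with h
      · calc (δ / 4) ^ 3 * 1 = (δ / 4) * ((δ / 4) * (δ / 4)) := by ring
          _ ≤ _ := mul_le_mul h.1 (mul_le_mul h.2.1 h.2.2 (by positivity) g1) (by positivity) g0
      · rw [mul_zero]; positivity
    have h2 : (δ / 4) ^ 3 * (𝔼 x, 𝔼 y, 𝔼 z, if H 0 x y ∧ H 1 y z ∧ H 2 z x then (1 : ℝ) else 0)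
        < (δ / 4) ^ 3 * β := by
      rw [mul_comm _ β, ← hm]; linarith
    exact lt_of_mul_lt_mul_left h2 (by positivity)
  obtain ⟨E, hEinv, hfree, hloss⟩ := hrem G c H
    (fun i u u' v v' hu hv => by simp only [H, hinv i u u' v v' hu hv]) hHT
  refine ⟨E, hfree, fun i => ?_⟩
  have h1 := htest i (fun x y => if E i x y then 0 else 1)
    (fun u u' v v' hu hv => by
      have := hEinv i u u' v v' hu hv
      by_cases a : E i u v <;> by_cases b : E i u' v' <;> simp [a, b] at this ⊢)
    (fun x y => by split_ifs <;> norm_num)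
  have h2 : 𝔼 x, 𝔼 y, g i x y * (if E i x y then (0 : ℝ) else 1)
      ≤ 𝔼 x, 𝔼 y, (δ / 4 + 2 * if H i x y ∧ ¬ E i x y then (1 : ℝ) else 0) := by
    refine expect_le_expect fun x _ => expect_le_expect fun y _ => ?_
    have := hg i x y
    by_cases a : H i x y
    · by_cases b : E i x y
      · simp only [a, b, if_true, not_true, and_false, if_false]; linarith
      · simp only [a, b, if_true, not_false_eq_true, and_self, if_false]; linarith
    · have a' : g i x y < δ / 4 := not_le.1 a
      by_cases b : E i x y
      · simp only [a, b, if_true, not_true, and_false, if_false]; linarith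
      · simp only [a, b, false_and, if_false]; linarith
  simp only [expect_add_distrib, ← mul_expect, Fintype.expect_const] at h2
  have h3 := hloss i
  linarith

/-! ### The tripartite graph of corners -/

/-- The indicator function of `B` multiplied by `N² / s`. -/
noncomputable def wt {N : ℕ} (s : ℕ) (B : Finset (ZMod N × ZMod N)) (p : ZMod N × ZMod N) : ℝ :=
  (N : ℝ) ^ 2 / (s : ℝ) * if p ∈ B then 1 else 0

/-- The three edge functions, at `(x, y)`, `(y, z)` and `(z, x)`, of the tripartite graph attached to
`f`. A triangle `x, y, z` corresponds to the corner at `(x, y)` with difference `z - x - y`. -/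
noncomputable def edgeFn {N : ℕ} (f : ZMod N × ZMod N → ℝ) : Fin 3 → ZMod N → ZMod N → ℝ :=
  ![fun x y => f (x, y), fun y z => f (z - y, y), fun z x => f (x, z - x)]

lemma wt_nonneg {N : ℕ} (s : ℕ) (B : Finset (ZMod N × ZMod N)) (p : ZMod N × ZMod N) :
    0 ≤ wt s B p := by
  unfold wt; positivity

lemma wt_le {N : ℕ} (s : ℕ) (B : Finset (ZMod N × ZMod N)) (p : ZMod N × ZMod N) :
    wt s B p ≤ (N : ℝ) ^ 2 / (s : ℝ) := by
  unfold wt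
  have : (0 : ℝ) ≤ (N : ℝ) ^ 2 / (s : ℝ) := by positivity
  split_ifs <;> simp [this]

lemma wt_mono {N : ℕ} (s : ℕ) {A B : Finset (ZMod N × ZMod N)} (h : A ⊆ B)
    (p : ZMod N × ZMod N) : wt s A p ≤ wt s B p := by
  unfold wt
  refine mul_le_mul_of_nonneg_left ?_ (by positivity)
  by_cases hp : p ∈ A
  · simp [hp, h hp]
  · simp only [hp, if_false]; split_ifs <;> norm_num

lemma expect_wt {N : ℕ} [NeZero N] (s : ℕ) (B : Finset (ZMod N × ZMod N)) :
    𝔼 x, 𝔼 y, wt s B (x, y) = B.card / s := by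
  have hN : (N : ℝ) ≠ 0 := by exact_mod_cast NeZero.ne N
  rw [← expect_prod (fun x y => wt s B (x, y)), Fintype.expect_eq_sum_div_card]
  simp only [wt, ← mul_sum, sum_boole, Fintype.card_prod, ZMod.card, Nat.cast_mul]
  rw [filter_mem_eq_inter, univ_inter]
  field_simp

/-- The hypothesis on corner factors, rephrased with `1` in place of each factor left out; that all
twelve may be left out is harmless. -/
lemma Phi_bound {N : ℕ} [NeZero N] {ν : ZMod N × ZMod N → ℝ} {η : ℝ} (hη : 0 ≤ η)
    (h : ∀ b : Fin 12 → Bool, (∃ i, b i = true) →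
        |avg (fun v : Fin 6 → ZMod N => ∏ i : Fin 12, if b i then
              cornerFactors ν (v 0) (v 1) (v 2) (v 3) (v 4) (v 5) i else 1) - 1| ≤ η)
    (s : Fin 12 → ZMod N → ZMod N → ℝ)
    (hs : ∀ i, s i = 1 ∨ s i = ![edgeFn ν 0, edgeFn ν 0, edgeFn ν 0, edgeFn ν 0, edgeFn ν 2,
      edgeFn ν 2, edgeFn ν 2, edgeFn ν 2, edgeFn ν 1, edgeFn ν 1, edgeFn ν 1, edgeFn ν 1] i) :
    |Phi s - 1| ≤ η := by
  classical
  by_cases h1 : ∀ i, s i = 1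
  · have : Phi s = 1 := by simp [Phi, h1]
    simpa [this] using hη
  · push Not at h1
    convert h (fun i => decide (s i ≠ 1)) (by simpa using h1) using 3
    rw [Phi, avg, Fintype.expect_eq_sum_div_card]
    congr 1
    refine sum_congr rfl fun v _ => prod_congr rfl fun i _ => ?_
    by_cases h2 : s i = 1
    · simp [h2]
    · simp only [ne_eq, h2, not_false_eq_true, decide_true, if_true]
      rw [(hs i).resolve_left h2]
      fin_cases i <;> rfl

/-- A pseudorandom set is not too sparse: among the sextuples averaged over, those with `x = x'`,
`y = y'`, `z = z' = x + y` and `(x, y) ∈ S` contribute `|S| (N² / |S|)¹²` to the sum. -/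
lemma card_bound {N : ℕ} [NeZero N] {S : Finset (ZMod N × ZMod N)} (hS : S.Nonempty)
    (h : |avg (fun v : Fin 6 → ZMod N => ∏ i : Fin 12,
      cornerFactors (wt S.card S) (v 0) (v 1) (v 2) (v 3) (v 4) (v 5) i) - 1| ≤ 1) :
    (N : ℝ) ^ 18 ≤ 2 * (S.card : ℝ) ^ 11 := by
  classical
  have hN : (0 : ℝ) < N := by exact_mod_cast NeZero.pos N
  have hs : (0 : ℝ) < S.card := by exact_mod_cast hS.card_pos
  have h1 := (abs_le.1 h).2
  let ψ : ZMod N × ZMod N → Fin 6 → ZMod N := fun p => ![p.1, p.1, p.2, p.2, p.1 + p.2, p.1 + p.2]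
  have hψ : Function.Injective ψ := by
    intro p q hpq
    exact Prod.ext (congrFun hpq 0) (congrFun hpq 2)
  have hnn : ∀ v : Fin 6 → ZMod N, ∀ i,
      0 ≤ cornerFactors (wt S.card S) (v 0) (v 1) (v 2) (v 3) (v 4) (v 5) i := by
    intro v i
    fin_cases i <;> exact wt_nonneg _ _ _
  have hval : ∀ p ∈ S, ∏ i : Fin 12, cornerFactors (wt S.card S)
      (ψ p 0) (ψ p 1) (ψ p 2) (ψ p 3) (ψ p 4) (ψ p 5) i = ((N : ℝ) ^ 2 / S.card) ^ 12 := by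
    intro p hp
    have hw : wt S.card S (p.1, p.2) = (N : ℝ) ^ 2 / S.card := by simp [wt, hp]
    have : ∀ i, cornerFactors (wt S.card S)
        (ψ p 0) (ψ p 1) (ψ p 2) (ψ p 3) (ψ p 4) (ψ p 5) i = (N : ℝ) ^ 2 / S.card := by
      intro i
      rw [← hw]
      fin_cases i <;> simp [cornerFactors, ψ]
    simp only [this, prod_const, card_univ, Fintype.card_fin]
  have h2 : (S.card : ℝ) * ((N : ℝ) ^ 2 / S.card) ^ 12 ≤ ∑ v : Fin 6 → ZMod N, ∏ i : Fin 12,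
      cornerFactors (wt S.card S) (v 0) (v 1) (v 2) (v 3) (v 4) (v 5) i := by
    rw [← nsmul_eq_mul, ← sum_const, ← sum_congr rfl hval,
      ← sum_image (g := ψ) (f := fun v => ∏ i : Fin 12,
        cornerFactors (wt S.card S) (v 0) (v 1) (v 2) (v 3) (v 4) (v 5) i) hψ.injOn]
    exact sum_le_sum_of_subset_of_nonneg (subset_univ _) fun v _ _ => prod_nonneg fun i _ => hnn v i
  have h3 : avg (fun v : Fin 6 → ZMod N => ∏ i : Fin 12,
      cornerFactors (wt S.card S) (v 0) (v 1) (v 2) (v 3) (v 4) (v 5) i) ≤ 2 := by linarith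
  rw [avg, div_le_iff₀ (by exact_mod_cast Fintype.card_pos)] at h3
  have h4 := h2.trans h3
  simp only [Fintype.card_fun, Fintype.card_fin, ZMod.card, Nat.cast_pow] at h4
  have h5 : (S.card : ℝ) * ((N : ℝ) ^ 2 / S.card) ^ 12 = N ^ 18 * N ^ 6 / (S.card : ℝ) ^ 11 := by
    field_simp
  rw [h5, div_le_iff₀ (by positivity)] at h4
  have h6 : (N : ℝ) ^ 18 * N ^ 6 ≤ (2 * (S.card : ℝ) ^ 11) * N ^ 6 := by linarith
  exact le_of_mul_le_mul_right h6 (by positivity)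

lemma small_of_bound {N s t : ℝ} (hN : 1 ≤ N) (hs : 0 < s) (ht : 0 < t) (h : N ^ 18 ≤ 2 * s ^ 11)
    (hNt : 4 / t ^ 11 ≤ N) : N ^ 3 / s ^ 2 ≤ t := by
  by_contra! hlt
  have hN0 : 0 < N := by linarith
  rw [lt_div_iff₀ (by positivity)] at hlt
  have h1 : (t * s ^ 2) ^ 11 < (N ^ 3) ^ 11 := pow_lt_pow_left₀ hlt (by positivity) (by norm_num)
  have h2 : (N ^ 18) ^ 2 ≤ (2 * s ^ 11) ^ 2 := pow_le_pow_left₀ (by positivity) h 2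
  rw [div_le_iff₀ (by positivity)] at hNt
  have h3 : N ^ 36 * t ^ 11 < 4 * N ^ 33 := by
    calc N ^ 36 * t ^ 11 = (N ^ 18) ^ 2 * t ^ 11 := by ring
      _ ≤ (2 * s ^ 11) ^ 2 * t ^ 11 := by gcongr
      _ = 4 * (t * s ^ 2) ^ 11 := by ring
      _ < 4 * (N ^ 3) ^ 11 := by linarith
      _ = 4 * N ^ 33 := by ring
  have h4 : 4 * N ^ 33 ≤ N ^ 36 * t ^ 11 := by
    calc 4 * N ^ 33 ≤ (N * t ^ 11) * N ^ 33 := by gcongr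
      _ = N ^ 34 * t ^ 11 := by ring
      _ ≤ N ^ 36 * t ^ 11 := by gcongr; norm_num
  linarith

/-- For a corner-free set only the triangles with `z = x + y` contribute. -/
lemma tri_corner_free {N : ℕ} [NeZero N] {A : Finset (ZMod N × ZMod N)} {s : ℕ} (hs : 0 < s)
    (hAs : A.card ≤ s)
    (hA : ¬ ∃ x y d : ZMod N, d ≠ 0 ∧ (x, y) ∈ A ∧ (x + d, y) ∈ A ∧ (x, y + d) ∈ A) :
    tri (edgeFn (wt s A) 0) (edgeFn (wt s A) 1) (edgeFn (wt s A) 2)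
      ≤ (N : ℝ) ^ 3 / (s : ℝ) ^ 2 := by
  have hN : (0 : ℝ) < N := by exact_mod_cast NeZero.pos N
  have hs' : (0 : ℝ) < s := by exact_mod_cast hs
  have h1 : ∀ x y z : ZMod N, edgeFn (wt s A) 0 x y * (edgeFn (wt s A) 1 y z * edgeFn (wt s A) 2 z x)
      ≤ wt s A (x, y) * ((N : ℝ) ^ 2 / s) ^ 2 * if z = x + y then 1 else 0 := by
    intro x y z
    change wt s A (x, y) * (wt s A (z - y, y) * wt s A (x, z - x)) ≤ _
    split_ifs with h
    · rw [mul_one, sq]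
      exact mul_le_mul_of_nonneg_left (mul_le_mul (wt_le _ _ _) (wt_le _ _ _) (wt_nonneg _ _ _)
        (by positivity)) (wt_nonneg _ _ _)
    · rw [mul_zero]
      apply le_of_eq
      by_contra hne
      have m1 : (x, y) ∈ A := by
        by_contra hh; exact hne (by simp [wt, hh])
      have m2 : (z - y, y) ∈ A := by
        by_contra hh; exact hne (by simp [wt, hh])
      have m3 : (x, z - x) ∈ A := by
        by_contra hh; exact hne (by simp [wt, hh])
      refine hA ⟨x, y, z - x - y, fun e => h ?_, m1, ?_, ?_⟩
      · linear_combination e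
      · convert m2 using 2; ring
      · convert m3 using 2; ring
  calc _ ≤ 𝔼 x, 𝔼 y, 𝔼 z, wt s A (x, y) * ((N : ℝ) ^ 2 / s) ^ 2 * (if z = x + y then 1 else 0) :=
        expect_le_expect fun x _ => expect_le_expect fun y _ => expect_le_expect fun z _ => h1 x y z
    _ = 𝔼 x, 𝔼 y, ((N : ℝ) ^ 2 / s) ^ 2 / N * wt s A (x, y) := by
        refine expect_congr rfl fun x _ => expect_congr rfl fun y _ => ?_
        rw [← mul_expect, Fintype.expect_eq_sum_div_card]
        simp
        ring
    _ = ((N : ℝ) ^ 2 / s) ^ 2 / N * (A.card / s) := by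
        simp only [← mul_expect, expect_wt]
    _ ≤ ((N : ℝ) ^ 2 / s) ^ 2 / N * 1 := by
        refine mul_le_mul_of_nonneg_left ?_ (by positivity)
        rw [div_le_one hs']
        exact_mod_cast hAs
    _ = _ := by field_simp

lemma expect_shift {N : ℕ} [NeZero N] (f : ZMod N → ℝ) (x : ZMod N) :
    𝔼 y, f (x + y) = 𝔼 y, f y :=
  Fintype.expect_equiv (Equiv.addLeft x) _ _ fun _ => rfl

open Classical in
/-- Each pair `(x, y)` spans the triangle `x, y, x + y`, whose three edges all have weight `f (x, y)`;
a triangle-free graph misses one of them. -/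
lemma mass_le {N : ℕ} [NeZero N] {f : ZMod N × ZMod N → ℝ} (hf : ∀ p, 0 ≤ f p) {δ : ℝ}
    {E : Fin 3 → ZMod N → ZMod N → Prop} (hE : ∀ x y z, E 0 x y → E 1 y z → E 2 z x → False)
    (h : ∀ i, (𝔼 x, 𝔼 y, edgeFn f i x y * if E i x y then 0 else 1) ≤ δ) :
    𝔼 x, 𝔼 y, f (x, y) ≤ 3 * δ := by
  have h0 := h 0
  have h1 := h 1
  have h2 := h 2
  have e1 : (𝔼 x, 𝔼 y, edgeFn f 1 x y * if E 1 x y then 0 else 1)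
      = 𝔼 x, 𝔼 y, f (x, y) * if E 1 y (x + y) then 0 else 1 := by
    rw [expect_comm (s := univ) (t := univ) (f := fun x y =>
      f (x, y) * if E 1 y (x + y) then 0 else 1)]
    refine expect_congr rfl fun y _ => ?_
    rw [← expect_shift _ y]
    refine expect_congr rfl fun x _ => ?_
    change f (y + x - y, y) * _ = _
    rw [add_sub_cancel_left, add_comm y x]
  have e2 : (𝔼 x, 𝔼 y, edgeFn f 2 x y * if E 2 x y then 0 else 1)
      = 𝔼 x, 𝔼 y, f (x, y) * if E 2 (x + y) x then 0 else 1 := by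
    rw [expect_comm]
    refine expect_congr rfl fun x _ => ?_
    rw [← expect_shift _ x]
    refine expect_congr rfl fun y _ => ?_
    change f (x, x + y - x) * _ = _
    rw [add_sub_cancel_left]
  rw [e1] at h1
  rw [e2] at h2
  have hle : 𝔼 x, 𝔼 y, f (x, y) ≤ 𝔼 x, 𝔼 y, (f (x, y) * (if E 0 x y then 0 else 1)
      + f (x, y) * (if E 1 y (x + y) then 0 else 1)
      + f (x, y) * (if E 2 (x + y) x then 0 else 1)) := by
    refine expect_le_expect fun x _ => expect_le_expect fun y _ => ?_
    have := hE x y (x + y)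
    have := hf (x, y)
    split_ifs <;> first | linarith | tauto
  simp only [expect_add_distrib] at hle
  have h0' : (𝔼 x, 𝔼 y, f (x, y) * if E 0 x y then 0 else 1) ≤ δ := h0
  linarith

end CornerRel

/-- **Corner-free subsets of pseudorandom subsets of `Z_N²`.** For every `δ > 0` there
exist `η > 0` and `N₀` such that for all `N ≥ N₀`: if `S ⊆ Z_N × Z_N` is nonempty,
`ν := (N²/|S|)·1_S`, and for every nonempty subset `F` of the twelve corner factors one
has `|E[∏_{factors in F} ν(·)] - 1| ≤ η`, then every corner-free `A ⊆ S` has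
`|A| ≤ δ|S|`. -/
theorem corner_removal_in_pseudorandom (δ : ℝ) (hδ : 0 < δ) :
    ∃ η : ℝ, 0 < η ∧ ∃ N₀ : ℕ, ∀ N : ℕ, N₀ ≤ N → ∀ [NeZero N],
      ∀ S : Finset (ZMod N × ZMod N), S.Nonempty →
      (∀ b : Fin 12 → Bool, (∃ i, b i = true) →
        |avg (fun v : Fin 6 → ZMod N =>
          ∏ i : Fin 12,
            if b i then
              cornerFactors
                (fun p => (N : ℝ) ^ 2 / (S.card : ℝ) * if p ∈ S then 1 else 0)
                (v 0) (v 1) (v 2) (v 3) (v 4) (v 5) i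
            else 1) - 1| ≤ η) →
      ∀ A : Finset (ZMod N × ZMod N), A ⊆ S →
      (¬ ∃ x y d : ZMod N, d ≠ 0 ∧
        (x, y) ∈ A ∧ (x + d, y) ∈ A ∧ (x, y + d) ∈ A) →
      (A.card : ℝ) ≤ δ * (S.card : ℝ) := by
  obtain ⟨η, t₀, hη, hη1, ht₀, hrem⟩ := CornerRel.relative_removal (δ / 3) (by positivity)
  obtain ⟨N₀, hN₀⟩ := exists_nat_ge (4 / t₀ ^ 11)
  refine ⟨η, hη, N₀, fun N hN _ S hS hyp A hAS hA => ?_⟩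
  have hs : (0 : ℝ) < S.card := by exact_mod_cast hS.card_pos
  have hyp' : ∀ b : Fin 12 → Bool, (∃ i, b i = true) →
      |avg (fun v : Fin 6 → ZMod N => ∏ i : Fin 12, if b i then cornerFactors
        (CornerRel.wt S.card S) (v 0) (v 1) (v 2) (v 3) (v 4) (v 5) i else 1) - 1| ≤ η := hyp
  have hcard := CornerRel.card_bound hS (by
    simpa using (hyp' (fun _ => true) ⟨0, rfl⟩).trans hη1)
  have hsmall := CornerRel.small_of_bound (by exact_mod_cast NeZero.one_le) hs ht₀ hcard
    (hN₀.trans (by exact_mod_cast hN))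
  obtain ⟨E, hfree, hE⟩ := hrem (ZMod N) (CornerRel.edgeFn (CornerRel.wt S.card S))
    (CornerRel.edgeFn (CornerRel.wt S.card A))
    (fun i x y => by
      fin_cases i <;> exact ⟨CornerRel.wt_nonneg _ _ _, CornerRel.wt_mono _ hAS _⟩)
    (CornerRel.Phi_bound hη.le hyp')
    ((CornerRel.tri_corner_free hS.card_pos (card_le_card hAS) hA).trans hsmall)
  have := CornerRel.mass_le (CornerRel.wt_nonneg S.card A) hfree hE
  rw [CornerRel.expect_wt, div_le_iff₀ hs] at this
  linarith
end
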